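/- Let n ≥ 2, let A be the Cartan matrix of type B_n, and let ι be an admissible sequence in I = {1,…,n} adapted to A. Then Ξ_ι = Tab_{B,ι}, i.e. the set of all linear forms obtained by applying finitely many operators S_k to the coordinate functions x_{j_0} coincides exactly with the set of column tableaux of type B. -/

import Mathlib

noncomputable section

/-- The coordinate linear form `x_k` (as a coefficient vector). -/
def xc (k : ℕ) : ℕ → ℚ := fun l => if l = k then 1 else 0

/-- Cartan matrix of type `A_n`. -/
def cartanA (_n : ℕ) (i j : ℕ) : ℤ :=
  if i = j then 2 else if i + 1 = j ∨ j + 1 = i then -1 else 0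

/-- Cartan matrix of type `B_n`. -/
def cartanB (n : ℕ) (i j : ℕ) : ℤ :=
  if i = j then 2
  else if i = n ∧ j = n - 1 then -2
  else if i + 1 = j ∨ j + 1 = i then -1 else 0

/-- Cartan matrix of type `C_n`. -/
def cartanC (n : ℕ) (i j : ℕ) : ℤ :=
  if i = j then 2
  else if i = n - 1 ∧ j = n then -2
  else if i + 1 = j ∨ j + 1 = i then -1 else 0

/-- Cartan matrix of type `D_n`. -/
def cartanD (n : ℕ) (i j : ℕ) : ℤ :=
  if i = j then 2
  else if (i = n - 1 ∧ j = n) ∨ (i = n ∧ j = n - 1) then 0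
  else if (i + 1 = j ∨ j + 1 = i) ∨ (i = n ∧ j = n - 2) ∨ (i = n - 2 ∧ j = n) then -1
  else 0

/-- `ι` (with positions indexed by `k ≥ 1`) takes values in `{1,…,n}`, has no two equal
consecutive entries, and every index occurs infinitely often. -/
def Admissible (n : ℕ) (ι : ℕ → ℕ) : Prop :=
  (∀ k, 1 ≤ k → 1 ≤ ι k ∧ ι k ≤ n) ∧
  (∀ k, 1 ≤ k → ι k ≠ ι (k + 1)) ∧
  (∀ i, 1 ≤ i → i ≤ n → ∀ N, ∃ k, N ≤ k ∧ ι k = i)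

/-- `k^+`: the next position after `k` carrying the same letter. -/
def kplus (ι : ℕ → ℕ) (k : ℕ) : ℕ := sInf {l | k < l ∧ ι l = ι k}

/-- `k^-`: the previous position (`≥ 1`) carrying the same letter, `0` if none. -/
def kminus (ι : ℕ → ℕ) (k : ℕ) : ℕ := sSup {l | 0 < l ∧ l < k ∧ ι l = ι k}

/-- The linear form `β_k` (with `β_0 = 0`). -/
def beta (A : ℕ → ℕ → ℤ) (ι : ℕ → ℕ) (k : ℕ) : ℕ → ℚ :=
  if k = 0 then 0
  else xc k + (∑ j ∈ Finset.Ioo k (kplus ι k), (A (ι k) (ι j) : ℚ) • xc j) + xc (kplus ι k)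

/-- The piecewise-linear operator `S_k`. -/
def Sop (A : ℕ → ℕ → ℤ) (ι : ℕ → ℕ) (k : ℕ) (φ : ℕ → ℚ) : ℕ → ℚ :=
  if 0 < φ k then φ - φ k • beta A ι k
  else φ - φ k • beta A ι (kminus ι k)

/-- Membership in `Ξ_ι`: forms obtained from some `x_{j_0}` by finitely many operators `S_k`. -/
inductive XiMem (A : ℕ → ℕ → ℤ) (ι : ℕ → ℕ) : (ℕ → ℚ) → Prop
  | base (k : ℕ) (hk : 1 ≤ k) : XiMem A ι (xc k)
  | step (k : ℕ) (hk : 1 ≤ k) (φ : ℕ → ℚ) (h : XiMem A ι φ) : XiMem A ι (Sop A ι k φ)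

/-- The set `Ξ_ι`. -/
def Xi (A : ℕ → ℕ → ℤ) (ι : ℕ → ℕ) : Set (ℕ → ℚ) := { φ | XiMem A ι φ }

/-- Forms obtained from a set `g` of generators by finitely many operators `S_k`. -/
inductive XiMemFrom (A : ℕ → ℕ → ℤ) (ι : ℕ → ℕ) (g : Set (ℕ → ℚ)) : (ℕ → ℚ) → Prop
  | base (φ : ℕ → ℚ) (h : φ ∈ g) : XiMemFrom A ι g φ
  | step (k : ℕ) (hk : 1 ≤ k) (φ : ℕ → ℚ) (h : XiMemFrom A ι g φ) :
      XiMemFrom A ι g (Sop A ι k φ)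

/-- `ι` is adapted to the Cartan matrix `A`: for `i ≠ j` with `a_{i,j} ≠ 0`, consecutive
members of the subsequence of `ι` consisting of the letters `i`, `j` are distinct. -/
def Adapted (n : ℕ) (A : ℕ → ℕ → ℤ) (ι : ℕ → ℕ) : Prop :=
  ∀ i j, 1 ≤ i → i ≤ n → 1 ≤ j → j ≤ n → i ≠ j → A i j ≠ 0 →
    ∀ k l, 1 ≤ k → k < l → (ι k = i ∨ ι k = j) → (ι l = i ∨ ι l = j) →
      (∀ m, k < m → m < l → ι m ≠ i ∧ ι m ≠ j) → ι k ≠ ι l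

/-- Position of the first occurrence of the letter `i` in `ι`. -/
def firstOcc (ι : ℕ → ℕ) (i : ℕ) : ℕ := sInf {k | 1 ≤ k ∧ ι k = i}

/-- `p_{i,j} = 1` iff the first occurrence of `i` precedes the first occurrence of `j`. -/
def pval (ι : ℕ → ℕ) (i j : ℕ) : ℕ := if firstOcc ι i < firstOcc ι j then 1 else 0

/-- The function `P(k)` for types A, B, C (and `P(k) = 0` for `k > n`, `k ≤ 1`). -/
def PABC (ι : ℕ → ℕ) (n k : ℕ) : ℕ :=
  if k ≤ n then ∑ t ∈ Finset.Icc 2 k, pval ι t (t - 1) else 0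

/-- The function `P(k)` for type D. -/
def PD (ι : ℕ → ℕ) (n k : ℕ) : ℕ :=
  if k = n then (∑ t ∈ Finset.Icc 2 (n - 2), pval ι t (t - 1)) + pval ι n (n - 2)
  else if k ≤ n then ∑ t ∈ Finset.Icc 2 k, pval ι t (t - 1) else 0

/-- `occPos ι j s`: the position of the `s`-th occurrence of the letter `j` in `ι`
(`0` for `s = 0`). -/
def occPos (ι : ℕ → ℕ) (j : ℕ) : ℕ → ℕ
  | 0 => 0
  | s + 1 => sInf {k | occPos ι j s < k ∧ ι k = j}

/-- The double-indexed coordinate form `x_{s,j}`, with the conventions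
`x_{s,0} = x_{s,n+1} = 0` and `x_{s,j} = 0` for `s ≤ 0`. -/
def xsj (ι : ℕ → ℕ) (n : ℕ) (s : ℤ) (j : ℕ) : ℕ → ℚ :=
  if 1 ≤ s ∧ 1 ≤ j ∧ j ≤ n then xc (occPos ι j s.toNat) else 0

/-- The double-indexed form `β_{s,j}`. -/
def betasj (A : ℕ → ℕ → ℤ) (ι : ℕ → ℕ) (s : ℤ) (j : ℕ) : ℕ → ℚ :=
  beta A ι (occPos ι j s.toNat)

/-- The double-indexed operator `S_{m,j}`. -/
def Ssj (A : ℕ → ℕ → ℤ) (ι : ℕ → ℕ) (m j : ℕ) (φ : ℕ → ℚ) : ℕ → ℚ :=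
  Sop A ι (occPos ι j m) φ

/- Entries of the ordered sets `J_X` are encoded as natural numbers:
an unbarred entry `j ∈ {1,…,n}` is encoded as `j`, a barred entry `j̄` is
encoded as `2n+1-j` (so that `n̄ = n+1, …, 1̄ = 2n` and the total order of
`J_B = J_C` is the numerical order), and the extra symbol `ovl(n+1)` of
types C and D is encoded as `0`. -/

/-- The box of type A. -/
def boxA (ι : ℕ → ℕ) (n : ℕ) (s : ℤ) (j : ℕ) : ℕ → ℚ :=
  xsj ι n (s + (PABC ι n j : ℤ)) j - xsj ι n (s + (PABC ι n (j - 1) : ℤ) + 1) (j - 1)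

/-- The box of type B. -/
def boxB (ι : ℕ → ℕ) (n : ℕ) (s : ℤ) (e : ℕ) : ℕ → ℚ :=
  if e ≤ n then
    xsj ι n (s + (PABC ι n e : ℤ)) e - xsj ι n (s + (PABC ι n (e - 1) : ℤ) + 1) (e - 1)
  else
    xsj ι n (s + (PABC ι n (2 * n - e) : ℤ) + (n : ℤ) - ((2 * n + 1 - e : ℕ) : ℤ) + 1)
        (2 * n - e)
      - xsj ι n (s + (PABC ι n (2 * n + 1 - e) : ℤ) + (n : ℤ) - ((2 * n + 1 - e : ℕ) : ℤ) + 1)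
          (2 * n + 1 - e)

/-- The box of type C (`ovl(n+1)` encoded as `0`). -/
def boxC (ι : ℕ → ℕ) (n : ℕ) (s : ℤ) (e : ℕ) : ℕ → ℚ :=
  if e = 0 then xsj ι n (s + (PABC ι n n : ℤ)) n
  else if e < n then
    xsj ι n (s + (PABC ι n e : ℤ)) e - xsj ι n (s + (PABC ι n (e - 1) : ℤ) + 1) (e - 1)
  else if e = n then
    (2 : ℚ) • xsj ι n (s + (PABC ι n n : ℤ)) n
      - xsj ι n (s + (PABC ι n (n - 1) : ℤ) + 1) (n - 1)
  else if e = n + 1 then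
    xsj ι n (s + (PABC ι n (n - 1) : ℤ) + 1) (n - 1)
      - (2 : ℚ) • xsj ι n (s + (PABC ι n n : ℤ) + 1) n
  else
    xsj ι n (s + (PABC ι n (2 * n - e) : ℤ) + (n : ℤ) - ((2 * n + 1 - e : ℕ) : ℤ) + 1)
        (2 * n - e)
      - xsj ι n (s + (PABC ι n (2 * n + 1 - e) : ℤ) + (n : ℤ) - ((2 * n + 1 - e : ℕ) : ℤ) + 1)
          (2 * n + 1 - e)

/-- The box of type D (`ovl(n+1)` encoded as `0`, `n̄` as `n+1`, `ovl(n-1)` as `n+2`). -/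
def boxD (ι : ℕ → ℕ) (n : ℕ) (s : ℤ) (e : ℕ) : ℕ → ℚ :=
  if e = 0 then xsj ι n (s + (PD ι n n : ℤ)) n
  else if e ≤ n - 2 then
    xsj ι n (s + (PD ι n e : ℤ)) e - xsj ι n (s + (PD ι n (e - 1) : ℤ) + 1) (e - 1)
  else if e = n - 1 then
    xsj ι n (s + (PD ι n (n - 1) : ℤ)) (n - 1) + xsj ι n (s + (PD ι n n : ℤ)) n
      - xsj ι n (s + (PD ι n (n - 2) : ℤ) + 1) (n - 2)
  else if e = n then
    xsj ι n (s + (PD ι n n : ℤ)) n - xsj ι n (s + (PD ι n (n - 1) : ℤ) + 1) (n - 1)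
  else if e = n + 1 then
    xsj ι n (s + (PD ι n (n - 1) : ℤ)) (n - 1) - xsj ι n (s + (PD ι n n : ℤ) + 1) n
  else if e = n + 2 then
    xsj ι n (s + (PD ι n (n - 2) : ℤ) + 1) (n - 2)
      - xsj ι n (s + (PD ι n (n - 1) : ℤ) + 1) (n - 1)
      - xsj ι n (s + (PD ι n n : ℤ) + 1) n
  else
    xsj ι n (s + (PD ι n (2 * n - e) : ℤ) + (n : ℤ) - ((2 * n + 1 - e : ℕ) : ℤ)) (2 * n - e)
      - xsj ι n (s + (PD ι n (2 * n + 1 - e) : ℤ) + (n : ℤ) - ((2 * n + 1 - e : ℕ) : ℤ))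
          (2 * n + 1 - e)

/-- The column tableau `[j_1,…,j_k]_s = Σ_{i=1}^k box_{s+k-i}(j_i)`. -/
def tab (box : ℤ → ℕ → ℕ → ℚ) (s : ℤ) (k : ℕ) (j : ℕ → ℕ) : ℕ → ℚ :=
  ∑ i ∈ Finset.Icc 1 k, box (s + (k : ℤ) - (i : ℤ)) (j i)

/-- The set `Tab_{A,ι}`. -/
def TabA (ι : ℕ → ℕ) (n : ℕ) : Set (ℕ → ℚ) :=
  { T | ∃ (k : ℕ) (s : ℤ) (j : ℕ → ℕ),
      1 ≤ k ∧ k ≤ n ∧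
      (∀ i, 1 ≤ i → i ≤ k → 1 ≤ j i ∧ j i ≤ n + 1) ∧
      (∀ i, 1 ≤ i → i < k → j i < j (i + 1)) ∧
      1 - (PABC ι n k : ℤ) ≤ s ∧
      T = tab (boxA ι n) s k j }

/-- `|·|` on encoded entries of `J_B = J_C`. -/
def absJ (n e : ℕ) : ℕ := if e ≤ n then e else 2 * n + 1 - e

/-- The set `Tab_{B,ι}`. -/
def TabB (ι : ℕ → ℕ) (n : ℕ) : Set (ℕ → ℚ) :=
  { T | ∃ (k : ℕ) (s : ℤ) (j : ℕ → ℕ),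
      1 ≤ k ∧ k ≤ n ∧
      (∀ i, 1 ≤ i → i ≤ k → 1 ≤ j i ∧ j i ≤ 2 * n) ∧
      (∀ i, 1 ≤ i → i < k → j i < j (i + 1)) ∧
      (k = n → ∀ l m, 1 ≤ l → l < m → m ≤ k → absJ n (j l) ≠ absJ n (j m)) ∧
      1 - (PABC ι n k : ℤ) ≤ s ∧
      T = tab (boxB ι n) s k j }

/-- Defining conditions of `Tab_{C,ι}` on the data `(k,s,j)`. -/
def TabCcond (ι : ℕ → ℕ) (n : ℕ) (k : ℕ) (s : ℤ) (j : ℕ → ℕ) : Prop :=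
  (1 ≤ k ∧ k ≤ n - 1 ∧
    (∀ i, 1 ≤ i → i ≤ k → 1 ≤ j i ∧ j i ≤ 2 * n) ∧
    (∀ i, 1 ≤ i → i < k → j i < j (i + 1)) ∧
    1 - (PABC ι n k : ℤ) ≤ s)
  ∨
  (j 1 = 0 ∧ 1 ≤ k ∧ k ≤ n + 1 ∧
    (∀ i, 2 ≤ i → i ≤ k → n + 1 ≤ j i ∧ j i ≤ 2 * n) ∧
    (∀ i, 2 ≤ i → i < k → j i < j (i + 1)) ∧
    1 - (PABC ι n n : ℤ) ≤ s)

/-- The set `Tab_{C,ι}`. -/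
def TabC (ι : ℕ → ℕ) (n : ℕ) : Set (ℕ → ℚ) :=
  { T | ∃ k s j, TabCcond ι n k s j ∧ T = tab (boxC ι n) s k j }

/-- The partial order on (encoded) `J_D`: `a ≤ b` iff `a = b`, or `a < b` numerically and
`(a,b)` is not the incomparable pair `(n, n̄)`. -/
def leD (n a b : ℕ) : Prop := a = b ∨ (a < b ∧ ¬(a = n ∧ b = n + 1))

/-- Defining conditions of `Tab_{D,ι}` on the data `(k,s,j)`. -/
def TabDcond (ι : ℕ → ℕ) (n : ℕ) (k : ℕ) (s : ℤ) (j : ℕ → ℕ) : Prop :=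
  (1 ≤ k ∧ k ≤ n - 2 ∧
    (∀ i, 1 ≤ i → i ≤ k → 1 ≤ j i ∧ j i ≤ 2 * n) ∧
    (∀ i, 1 ≤ i → i < k → ¬ leD n (j (i + 1)) (j i)) ∧
    1 - (PD ι n k : ℤ) ≤ s)
  ∨
  (j 1 = 0 ∧ 1 ≤ k ∧ k ≤ n + 1 ∧
    (∀ i, 2 ≤ i → i ≤ k → n + 1 ≤ j i ∧ j i ≤ 2 * n) ∧
    (∀ i, 2 ≤ i → i < k → j i < j (i + 1)) ∧
    (k % 2 = 0 → 1 - (PD ι n (n - 1) : ℤ) ≤ s) ∧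
    (k % 2 = 1 → 1 - (PD ι n n : ℤ) ≤ s))

/-- The set `Tab_{D,ι}`. -/
def TabD (ι : ℕ → ℕ) (n : ℕ) : Set (ℕ → ℚ) :=
  { T | ∃ k s j, TabDcond ι n k s j ∧ T = tab (boxD ι n) s k j }

end

/-!
Fold the diagram of `A_{2n-1}` onto that of `B_n` by `v ↦ min v (2n - v)`. A column tableau is a set
`S` of entries in `{1, …, 2n}` together with a level `s`, and after summation by parts its form
becomes `∑ ± x_v`, over those vertices `v` for which exactly one of `v`, `v + 1` lies in `S`. Hence
`S_k` acts on a column by exchanging `v` and `v + 1`, where `v` is a vertex folded onto the letter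
`i_k`. Both vertices `v` and `2n - v` may contribute at the same position: with opposite signs they
cancel, and with equal signs both exchanges take place. A column with `n` entries and no pair
`j`, `j̄` is symmetric under `v ↔ 2n - v`, so there the two exchanges always occur together and the
absence of such pairs is preserved. Thus `Ξ_ι` consists of columns.

Conversely, every column can be brought by such exchanges to `{1, …, k}`, whose form is a single
coordinate, and each step either leaves the form unchanged or is undone by an operator.
-/

section Occurrences

variable {n : ℕ} {ι : ℕ → ℕ} {i j : ℕ}

theorem Admissible.infinite_setOf_eq (hadm : Admissible n ι) (h1 : 1 ≤ j) (hn : j ≤ n) :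
    {k | ι k = j}.Infinite :=
  Set.infinite_of_forall_exists_gt fun N ↦
    let ⟨k, hk, hkj⟩ := hadm.2.2 j h1 hn (N + 1)
    ⟨k, hkj, hk⟩

theorem occPos_succ_spec (hj : {k | ι k = j}.Infinite) (s : ℕ) :
    occPos ι j s < occPos ι j (s + 1) ∧ ι (occPos ι j (s + 1)) = j :=
  Nat.sInf_mem (s := {k | occPos ι j s < k ∧ ι k = j})
    (let ⟨k, hkj, hk⟩ := hj.exists_gt (occPos ι j s); ⟨k, hk, hkj⟩)

theorem occPos_succ_le {s m : ℕ} (hm : occPos ι j s < m) (hmj : ι m = j) :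
    occPos ι j (s + 1) ≤ m :=
  Nat.sInf_le (s := {k | occPos ι j s < k ∧ ι k = j}) ⟨hm, hmj⟩

theorem occPos_strictMono (hj : {k | ι k = j}.Infinite) : StrictMono (occPos ι j) :=
  strictMono_nat_of_lt_succ fun s ↦ (occPos_succ_spec hj s).1

theorem exists_occPos_succ_eq (hj : {k | ι k = j}.Infinite) {k : ℕ} (hk : 1 ≤ k)
    (hkj : ι k = j) : ∃ s, occPos ι j (s + 1) = k := by
  have hex : ∃ s, k ≤ occPos ι j s := ⟨k, (occPos_strictMono hj).id_le k⟩
  obtain ⟨s, hs⟩ : ∃ s, Nat.find hex = s + 1 := by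
    refine Nat.exists_eq_succ_of_ne_zero fun h0 ↦ ?_
    have := Nat.find_spec hex
    rw [h0, occPos] at this
    omega
  have hlt : occPos ι j s < k := not_le.1 (Nat.find_min hex (by omega))
  exact ⟨s, (occPos_succ_le hlt hkj).antisymm (hs ▸ Nat.find_spec hex)⟩

theorem kplus_occPos (hj : {k | ι k = j}.Infinite) (s : ℕ) :
    kplus ι (occPos ι j (s + 1)) = occPos ι j (s + 2) := by
  rw [kplus, (occPos_succ_spec hj s).2]
  rfl

theorem kminus_occPos (hj : {k | ι k = j}.Infinite) (s : ℕ) :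
    kminus ι (occPos ι j (s + 1)) = occPos ι j s := by
  rw [kminus, (occPos_succ_spec hj s).2]
  have hub : ∀ l ∈ {l | 0 < l ∧ l < occPos ι j (s + 1) ∧ ι l = j}, l ≤ occPos ι j s :=
    fun l ⟨_, hl, hlj⟩ ↦ not_lt.1 fun h ↦ (occPos_succ_le h hlj).not_gt hl
  cases s with
  | zero => exact Nat.le_zero.1 (csSup_le' hub)
  | succ s =>
    have hs := occPos_succ_spec hj s
    exact IsGreatest.csSup_eq ⟨⟨by omega, occPos_strictMono hj (by omega), hs.2⟩, hub⟩

/-- The condition that `Adapted` imposes on one pair of letters: in the subsequence of `ι` made of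
the letters `i` and `j`, neighbouring entries differ. -/
def Alternates (ι : ℕ → ℕ) (i j : ℕ) : Prop :=
  ∀ k l, 1 ≤ k → k < l → (ι k = i ∨ ι k = j) → (ι l = i ∨ ι l = j) →
    (∀ m, k < m → m < l → ι m ≠ i ∧ ι m ≠ j) → ι k ≠ ι l

theorem Alternates.symm (h : Alternates ι i j) : Alternates ι j i :=
  fun k l hk hkl hik hil hbet ↦ h k l hk hkl hik.symm hil.symm fun m h1 h2 ↦ (hbet m h1 h2).symm

theorem Alternates.exists_occPos_between (h : Alternates ι i j) (hi : {k | ι k = i}.Infinite)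
    (hj : {k | ι k = j}.Infinite) (s : ℕ) :
    ∃ m, occPos ι i (s + 1) < occPos ι j m ∧ occPos ι j m < occPos ι i (s + 2) := by
  by_contra! hcon
  have h1 := occPos_succ_spec hi s
  have h2 := occPos_succ_spec hi (s + 1)
  refine h _ _ (by omega) h2.1 (.inl h1.2) (.inl h2.2) (fun m hm hm' ↦ ⟨fun hmi ↦ ?_, fun hmj ↦ ?_⟩)
    (h1.2.trans h2.2.symm)
  · exact (occPos_succ_le hm hmi).not_gt hm'
  · obtain ⟨t, rfl⟩ := exists_occPos_succ_eq hj (by omega) hmj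
    exact (hcon _ hm).not_gt hm'

theorem Alternates.occPos_interlace (h : Alternates ι i j) (hi : {k | ι k = i}.Infinite)
    (hj : {k | ι k = j}.Infinite) (h0 : firstOcc ι i < firstOcc ι j) (m : ℕ) :
    occPos ι j m < occPos ι i (m + 1) ∧ occPos ι i (m + 1) < occPos ι j (m + 1) := by
  have hmi := occPos_strictMono hi
  have hmj := occPos_strictMono hj
  induction m with
  | zero => exact ⟨(Nat.zero_le _).trans_lt (occPos_succ_spec hi 0).1, h0⟩
  | succ m ih =>
    have hji : occPos ι j (m + 1) < occPos ι i (m + 2) := by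
      obtain ⟨t, ht, ht'⟩ := h.exists_occPos_between hi hj m
      have : m < t := hmj.lt_iff_lt.1 (by omega)
      exact (hmj.monotone this).trans_lt ht'
    obtain ⟨t, ht, ht'⟩ := h.symm.exists_occPos_between hj hi m
    have : m + 1 < t := hmi.lt_iff_lt.1 (by omega)
    exact ⟨hji, (hmi.monotone this).trans_lt ht'⟩

theorem firstOcc_ne (hi : {k | ι k = i}.Infinite) (hj : {k | ι k = j}.Infinite) (hij : i ≠ j) :
    firstOcc ι i ≠ firstOcc ι j := fun h ↦
  hij <| calc
    i = ι (firstOcc ι i) := (occPos_succ_spec hi 0).2.symm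
    _ = ι (firstOcc ι j) := by rw [h]
    _ = j := (occPos_succ_spec hj 0).2

theorem pval_add_pval_swap (hi : {k | ι k = i}.Infinite) (hj : {k | ι k = j}.Infinite)
    (hij : i ≠ j) : pval ι i j + pval ι j i = 1 := by
  have := firstOcc_ne hi hj hij
  unfold pval
  split_ifs <;> omega

theorem pval_le_one (i j : ℕ) : pval ι i j ≤ 1 := by
  unfold pval
  split_ifs <;> omega

theorem Alternates.occPos_between_iff (h : Alternates ι i j) (hi : {k | ι k = i}.Infinite)
    (hj : {k | ι k = j}.Infinite) (hij : i ≠ j) (s t : ℕ) :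
    (occPos ι j (s + 1) < occPos ι i t ∧ occPos ι i t < occPos ι j (s + 2)) ↔
      t = s + 1 + pval ι i j := by
  suffices hbet : occPos ι i (s + pval ι i j) < occPos ι j (s + 1) ∧
      occPos ι j (s + 1) < occPos ι i (s + 1 + pval ι i j) ∧
      occPos ι i (s + 1 + pval ι i j) < occPos ι j (s + 2) ∧
      occPos ι j (s + 2) < occPos ι i (s + 2 + pval ι i j) by
    have hmi := occPos_strictMono hi
    refine ⟨fun ⟨h1, h2⟩ ↦ ?_, fun ht ↦ ht ▸ ⟨hbet.2.1, hbet.2.2.1⟩⟩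
    have := hmi.lt_iff_lt.1 (hbet.1.trans h1)
    have := hmi.lt_iff_lt.1 (h2.trans hbet.2.2.2)
    omega
  by_cases h0 : firstOcc ι i < firstOcc ι j
  · rw [pval, if_pos h0]
    have hlace := h.occPos_interlace hi hj h0
    exact ⟨(hlace s).2, (hlace (s + 1)).1, (hlace (s + 1)).2, (hlace (s + 2)).1⟩
  · rw [pval, if_neg h0]
    have hlace := h.symm.occPos_interlace hj hi
      ((not_lt.1 h0).lt_of_ne (firstOcc_ne hj hi hij.symm))
    exact ⟨(hlace s).1, (hlace s).2, (hlace (s + 1)).1, (hlace (s + 1)).2⟩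

theorem sum_xc_between (hadm : Admissible n ι) (hj : {k | ι k = j}.Infinite)
    (h : 1 ≤ i → i ≤ n → Alternates ι i j) (hij : i ≠ j) (s : ℕ) :
    ∑ l ∈ Finset.Ioo (occPos ι j (s + 1)) (occPos ι j (s + 2)), (if ι l = i then xc l else 0) =
      xsj ι n (s + 1 + pval ι i j) i := by
  rw [← Finset.sum_filter]
  by_cases hi : 1 ≤ i ∧ i ≤ n
  · have hinf := hadm.infinite_setOf_eq hi.1 hi.2
    have hbet := (h hi.1 hi.2).occPos_between_iff hinf hj hij s
    have hsing : {l ∈ Finset.Ioo (occPos ι j (s + 1)) (occPos ι j (s + 2)) | ι l = i} =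
        {occPos ι i (s + 1 + pval ι i j)} := by
      ext l
      simp only [Finset.mem_filter, Finset.mem_Ioo, Finset.mem_singleton]
      refine ⟨fun ⟨hl, hli⟩ ↦ ?_, ?_⟩
      · obtain ⟨t, rfl⟩ := exists_occPos_succ_eq hinf (by omega) hli
        rw [(hbet _).1 hl]
      · rintro rfl
        refine ⟨(hbet _).2 rfl, ?_⟩
        rw [show s + 1 + pval ι i j = s + pval ι i j + 1 by omega]
        exact (occPos_succ_spec hinf _).2
    rw [hsing, Finset.sum_singleton, xsj, if_pos (by omega)]
    congr
  · rw [xsj, if_neg (by omega), Finset.filter_eq_empty_iff.2, Finset.sum_empty]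
    rintro l hl rfl
    exact hi (hadm.1 l (by rw [Finset.mem_Ioo] at hl; omega))

end Occurrences

section Coordinates

variable {n : ℕ} {ι : ℕ → ℕ} {j k : ℕ} {t : ℤ}

theorem Adapted.alternates (hadap : Adapted n (cartanB n) ι) {i : ℕ} (hi1 : 1 ≤ i) (hin : i ≤ n)
    (hj1 : 1 ≤ j) (hjn : j ≤ n) (hij : i + 1 = j ∨ j + 1 = i) : Alternates ι i j := by
  refine hadap i j hi1 hin hj1 hjn (by omega) ?_
  unfold cartanB
  split_ifs <;> omega

theorem cartanB_smul_eq {l : ℕ} (hj1 : 1 ≤ j) (hjn : j ≤ n) (hl1 : 1 ≤ l) (hln : l ≤ n)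
    (hlj : l ≠ j) (φ : ℕ → ℚ) :
    (cartanB n j l : ℚ) • φ =
      -((if j = n then 2 else 1 : ℚ) • (if l = j - 1 then φ else 0)) -
        (if l = j + 1 then φ else 0) := by
  rcases lt_trichotomy l (j - 1) with h | rfl | h
  · have : cartanB n j l = 0 := by unfold cartanB; split_ifs <;> omega
    simp [this, h.ne, show l ≠ j + 1 by omega]
  · have : cartanB n j (j - 1) = if j = n then -2 else -1 := by
      unfold cartanB; split_ifs <;> omega
    rw [this, if_pos rfl, if_neg (show j - 1 ≠ j + 1 by omega), sub_zero, ← neg_smul]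
    split_ifs <;> norm_num
  · have : cartanB n j l = if l = j + 1 then -1 else 0 := by
      unfold cartanB; split_ifs <;> omega
    rw [this, if_neg h.ne']
    split_ifs <;> simp

theorem beta_occPos (hadm : Admissible n ι) (hadap : Adapted n (cartanB n) ι) (hj1 : 1 ≤ j)
    (hjn : j ≤ n) (s : ℕ) :
    beta (cartanB n) ι (occPos ι j (s + 1)) =
      xsj ι n (s + 1) j + xsj ι n (s + 2) j -
        (if j = n then 2 else 1 : ℚ) • xsj ι n (s + 1 + pval ι (j - 1) j) (j - 1) -
        xsj ι n (s + 1 + pval ι (j + 1) j) (j + 1) := by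
  have hj := hadm.infinite_setOf_eq hj1 hjn
  have hspec := occPos_succ_spec hj s
  have hterm : ∀ l ∈ Finset.Ioo (occPos ι j (s + 1)) (occPos ι j (s + 2)),
      (cartanB n j (ι l) : ℚ) • xc l =
        -((if j = n then 2 else 1 : ℚ) • (if ι l = j - 1 then xc l else 0)) -
          (if ι l = j + 1 then xc l else 0) := fun l hl ↦ by
    rw [Finset.mem_Ioo] at hl
    have hιl := hadm.1 l (by omega)
    exact cartanB_smul_eq hj1 hjn hιl.1 hιl.2 (fun h ↦ (occPos_succ_le hl.1 h).not_gt hl.2) _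
  rw [beta, if_neg (by omega), kplus_occPos hj, hspec.2, Finset.sum_congr rfl hterm,
    Finset.sum_sub_distrib, Finset.sum_neg_distrib, ← Finset.smul_sum,
    sum_xc_between hadm hj
      (fun h1 hn ↦ hadap.alternates h1 hn hj1 hjn (by omega)) (by omega) s,
    sum_xc_between hadm hj
      (fun h1 hn ↦ hadap.alternates h1 hn hj1 hjn (by omega)) (by omega) s]
  have hfirst : xsj ι n (s + 1) j = xc (occPos ι j (s + 1)) := if_pos ⟨by omega, hj1, hjn⟩
  have hlast : xsj ι n (s + 2) j = xc (occPos ι j (s + 2)) := if_pos ⟨by omega, hj1, hjn⟩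
  rw [hfirst, hlast]
  abel

theorem pabc_zero (ι : ℕ → ℕ) (n : ℕ) : PABC ι n 0 = 0 := by simp [PABC]

theorem pabc_one (ι : ℕ → ℕ) (n : ℕ) : PABC ι n 1 = 0 := by simp [PABC]

theorem pabc_succ (hj1 : 1 ≤ j) (hjn : j + 1 ≤ n) :
    PABC ι n (j + 1) = PABC ι n j + pval ι (j + 1) j := by
  rw [PABC, if_pos hjn, Finset.sum_Icc_succ_top (by omega), PABC, if_pos (by omega),
    Nat.add_sub_cancel]

theorem pabc_bounds (hjk : j ≤ k) (hkn : k ≤ n) :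
    PABC ι n j ≤ PABC ι n k ∧ PABC ι n k ≤ PABC ι n j + (k - j) := by
  induction k, hjk using Nat.le_induction with
  | base => simp
  | succ k hjk ih =>
    have hstep : PABC ι n k ≤ PABC ι n (k + 1) ∧ PABC ι n (k + 1) ≤ PABC ι n k + 1 := by
      rcases Nat.eq_zero_or_pos k with rfl | hk
      · simp [pabc_zero, pabc_one]
      · have := pval_le_one (ι := ι) (k + 1) k
        rw [pabc_succ hk hkn]
        omega
    have := ih (by omega)
    omega

/-- The coordinate forms `x_{t + P(j), j}`; in this indexing every `β` has the same shape, see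
`root`. -/
noncomputable def coord (ι : ℕ → ℕ) (n : ℕ) (t : ℤ) (j : ℕ) : ℕ → ℚ := xsj ι n (t + PABC ι n j) j

/-- The position in `ι` to which `coord ι n t j` belongs. -/
noncomputable def coordPos (ι : ℕ → ℕ) (n : ℕ) (t : ℤ) (j : ℕ) : ℕ :=
  occPos ι j (t + PABC ι n j).toNat

/-- `(t, j)` is the index of an actual coordinate: `coord ι n t j` is not zero by convention. -/
structure IsIndex (ι : ℕ → ℕ) (n : ℕ) (t : ℤ) (j : ℕ) : Prop where
  one_le : 1 ≤ j
  le : j ≤ n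
  one_le_add : 1 ≤ t + PABC ι n j

/-- The form `β` at the position `coordPos ι n t j`, expressed in the coordinates `coord`. -/
noncomputable def root (ι : ℕ → ℕ) (n : ℕ) (t : ℤ) (j : ℕ) : ℕ → ℚ :=
  coord ι n t j + coord ι n (t + 1) j - (if j = n then 2 else 1 : ℚ) • coord ι n (t + 1) (j - 1) -
    coord ι n t (j + 1)

theorem coord_zero (ι : ℕ → ℕ) (n : ℕ) (t : ℤ) : coord ι n t 0 = 0 := if_neg (by omega)

theorem IsIndex.coord_eq (h : IsIndex ι n t j) : coord ι n t j = xc (coordPos ι n t j) :=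
  if_pos ⟨h.one_le_add, h.one_le, h.le⟩

theorem coord_eq_zero (h : ¬ IsIndex ι n t j) : coord ι n t j = 0 :=
  if_neg fun h' ↦ h ⟨h'.2.1, h'.2.2, h'.1⟩

theorem IsIndex.exists_coordPos_eq (h : IsIndex ι n t j) :
    ∃ s : ℕ, (s : ℤ) + 1 = t + PABC ι n j ∧ coordPos ι n t j = occPos ι j (s + 1) := by
  have := h.one_le_add
  refine ⟨(t + PABC ι n j).toNat - 1, by omega, ?_⟩
  rw [coordPos, Nat.sub_add_cancel (by omega)]

theorem IsIndex.one_le_coordPos (h : IsIndex ι n t j) (hadm : Admissible n ι) :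
    1 ≤ coordPos ι n t j := by
  obtain ⟨s, -, hs⟩ := h.exists_coordPos_eq
  rw [hs]
  exact (Nat.zero_le _).trans_lt (occPos_succ_spec (hadm.infinite_setOf_eq h.one_le h.le) s).1

theorem exists_coordPos_eq (hadm : Admissible n ι) (hk : 1 ≤ k) :
    ∃ t j, IsIndex ι n t j ∧ coordPos ι n t j = k := by
  obtain ⟨h1, hn⟩ := hadm.1 k hk
  obtain ⟨s, hs⟩ := exists_occPos_succ_eq (hadm.infinite_setOf_eq h1 hn) hk rfl
  refine ⟨s + 1 - PABC ι n (ι k), ι k, ⟨h1, hn, by omega⟩, ?_⟩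
  rw [coordPos, sub_add_cancel]
  exact hs

theorem coordPos_inj (hadm : Admissible n ι) {t' : ℤ} {j' : ℕ} (h : IsIndex ι n t j)
    (h' : IsIndex ι n t' j') (heq : coordPos ι n t j = coordPos ι n t' j') : t = t' ∧ j = j' := by
  obtain ⟨s, hs, hpos⟩ := h.exists_coordPos_eq
  obtain ⟨s', hs', hpos'⟩ := h'.exists_coordPos_eq
  have hinf := hadm.infinite_setOf_eq h.one_le h.le
  rw [hpos, hpos'] at heq
  obtain rfl : j = j' := by
    rw [← (occPos_succ_spec hinf s).2, heq,
      (occPos_succ_spec (hadm.infinite_setOf_eq h'.one_le h'.le) s').2]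
  have := (occPos_strictMono hinf).injective heq
  omega

theorem IsIndex.coord_apply (h : IsIndex ι n t j) (hadm : Admissible n ι) (t' : ℤ) (j' : ℕ) :
    coord ι n t' j' (coordPos ι n t j) = if t' = t ∧ j' = j then 1 else 0 := by
  by_cases h' : IsIndex ι n t' j'
  · rw [h'.coord_eq, xc]
    refine if_congr ⟨fun heq ↦ coordPos_inj hadm h' h heq.symm, ?_⟩ rfl rfl
    rintro ⟨rfl, rfl⟩
    rfl
  · rw [coord_eq_zero h', if_neg, Pi.zero_apply]
    rintro ⟨rfl, rfl⟩
    exact h' h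

theorem IsIndex.beta_coordPos (h : IsIndex ι n t j) (hadm : Admissible n ι)
    (hadap : Adapted n (cartanB n) ι) :
    beta (cartanB n) ι (coordPos ι n t j) = root ι n t j := by
  obtain ⟨s, hs, hpos⟩ := h.exists_coordPos_eq
  have hleft : xsj ι n (s + 1 + pval ι (j - 1) j) (j - 1) = coord ι n (t + 1) (j - 1) := by
    obtain ⟨i, rfl⟩ := Nat.exists_eq_add_of_le' h.one_le
    rw [Nat.add_sub_cancel]
    rcases Nat.eq_zero_or_pos i with rfl | hi
    · rw [coord_zero, xsj, if_neg (by omega)]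
    · have hP := pabc_succ (ι := ι) hi h.le
      have hpval := pval_add_pval_swap (hadm.infinite_setOf_eq (by omega) h.le)
        (hadm.infinite_setOf_eq hi (by have := h.le; omega)) (Nat.succ_ne_self i)
      rw [coord]
      congr 1
      omega
  have hright : xsj ι n (s + 1 + pval ι (j + 1) j) (j + 1) = coord ι n t (j + 1) := by
    rcases h.le.eq_or_lt with hjn | hjn
    · rw [coord, xsj, if_neg (by omega), xsj, if_neg (by omega)]
    · rw [coord, pabc_succ h.one_le hjn, hs, Nat.cast_add, add_assoc]
  rw [hpos, beta_occPos hadm hadap h.one_le h.le, hleft, hright, root, coord, coord]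
  congr 4
  omega

theorem IsIndex.sop_coordPos (h : IsIndex ι n t j) (hadm : Admissible n ι)
    (hadap : Adapted n (cartanB n) ι) {φ : ℕ → ℚ}
    (hφ : φ (coordPos ι n t j) < 0 → IsIndex ι n (t - 1) j) :
    Sop (cartanB n) ι (coordPos ι n t j) φ =
      φ - φ (coordPos ι n t j) •
        root ι n (if 0 < φ (coordPos ι n t j) then t else t - 1) j := by
  rcases lt_trichotomy (φ (coordPos ι n t j)) 0 with hneg | hzero | hpos
  · have hminus : kminus ι (coordPos ι n t j) = coordPos ι n (t - 1) j := by
      obtain ⟨s, hs, hsj⟩ := h.exists_coordPos_eq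
      rw [hsj, kminus_occPos (hadm.infinite_setOf_eq h.one_le h.le), coordPos]
      congr 1
      omega
    rw [Sop, if_neg hneg.not_gt, if_neg hneg.not_gt, hminus,
      (hφ hneg).beta_coordPos hadm hadap]
  · simp [Sop, hzero]
  · rw [Sop, if_pos hpos, if_pos hpos, h.beta_coordPos hadm hadap]

end Coordinates

section Folding

variable {n v : ℕ}

/-- The vertex of the `B_n` diagram onto which the vertex `v` of `A_{2n-1}` is folded. -/
def node (n v : ℕ) : ℕ := min v (2 * n - v)

theorem node_of_le (hv : v ≤ n) : node n v = v := min_eq_left (by omega)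

theorem node_of_ge (hv : n ≤ v) : node n v = 2 * n - v := min_eq_right (by omega)

theorem node_reflect (hv : v ≤ 2 * n) : node n (2 * n - v) = node n v := by
  rw [node, node, Nat.sub_sub_self hv, min_comm]

/-- The coordinates `coord`, indexed by the vertices of `A_{2n-1}`. The shift `v - n`, truncated to
`0` for `v ≤ n`, gives boxes and roots the type `A` shape of `boxB_eq_foldCoord_sub` and
`root_node`. -/
noncomputable def foldCoord (ι : ℕ → ℕ) (n : ℕ) (s : ℤ) (v : ℕ) : ℕ → ℚ :=
  coord ι n (s + (v - n : ℕ)) (node n v)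

variable (ι : ℕ → ℕ) (s : ℤ)

theorem foldCoord_of_le (hv : v ≤ n) : foldCoord ι n s v = coord ι n s v := by
  rw [foldCoord, node_of_le hv, Nat.sub_eq_zero_of_le hv, Nat.cast_zero, add_zero]

theorem foldCoord_of_ge (hv : n ≤ v) : foldCoord ι n s v = coord ι n (s + v - n) (2 * n - v) := by
  rw [foldCoord, node_of_ge hv, Nat.cast_sub hv, add_sub_assoc]

theorem boxB_eq_foldCoord_sub (hv1 : 1 ≤ v) (hv2 : v ≤ 2 * n) :
    boxB ι n s v = foldCoord ι n s v - foldCoord ι n (s + 1) (v - 1) := by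
  rcases le_or_gt v n with hvn | hvn
  · rw [boxB, if_pos hvn, foldCoord_of_le ι s hvn, foldCoord_of_le ι (s + 1) (by omega), coord,
      coord, add_right_comm]
  · rw [boxB, if_neg hvn.not_ge, foldCoord_of_ge ι s hvn.le, foldCoord_of_ge ι (s + 1) (by omega),
      coord, coord, show 2 * n - (v - 1) = 2 * n + 1 - v by omega]
    congr 2 <;> omega

theorem root_node (hv1 : 1 ≤ v) (hv2 : v < 2 * n) :
    root ι n (s + (v - n : ℕ)) (node n v) =
      foldCoord ι n s v + foldCoord ι n (s + 1) v - foldCoord ι n (s + 1) (v - 1) -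
        foldCoord ι n s (v + 1) := by
  rcases lt_trichotomy v n with hvn | rfl | hvn
  · rw [node_of_le hvn.le, Nat.sub_eq_zero_of_le hvn.le, Nat.cast_zero, add_zero, root,
      if_neg hvn.ne, one_smul]
    simp only [foldCoord_of_le, hvn.le, hvn, Nat.succ_le_of_lt, (Nat.sub_le v 1).trans]
  · have hright : foldCoord ι v s (v + 1) = coord ι v (s + 1) (v - 1) := by
      rw [foldCoord_of_ge ι s (Nat.le_succ v)]
      congr 1 <;> omega
    have hzero : coord ι v s (v + 1) = 0 := coord_eq_zero fun h ↦ (Nat.lt_irrefl v) h.le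
    rw [hright, node_of_le le_rfl, Nat.sub_self, Nat.cast_zero, add_zero, root, if_pos rfl, hzero,
      foldCoord_of_le ι s le_rfl, foldCoord_of_le ι (s + 1) le_rfl,
      foldCoord_of_le ι (s + 1) (Nat.sub_le v 1), two_smul]
    abel
  · rw [node_of_ge hvn.le, Nat.cast_sub hvn.le, root, if_neg (by omega), one_smul,
      foldCoord_of_ge ι s hvn.le, foldCoord_of_ge ι (s + 1) hvn.le,
      foldCoord_of_ge ι (s + 1) (by omega), foldCoord_of_ge ι s (by omega),
      show 2 * n - (v - 1) = 2 * n - v + 1 by omega, show 2 * n - (v + 1) = 2 * n - v - 1 by omega,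
      show s + v - n = s + (v - n : ℤ) by omega, show s + 1 + v - n = s + (v - n : ℤ) + 1 by omega,
      show s + 1 + (v - 1 : ℕ) - n = s + (v - n : ℤ) by omega,
      show s + (v + 1 : ℕ) - n = s + (v - n : ℤ) + 1 by omega]
    exact sub_right_comm ..

theorem boxB_succ (hv1 : 1 ≤ v) (hv2 : v < 2 * n) :
    boxB ι n s (v + 1) = boxB ι n s v - root ι n (s + (v - n : ℕ)) (node n v) := by
  rw [boxB_eq_foldCoord_sub (v := v + 1) ι s (by omega) hv2, boxB_eq_foldCoord_sub ι s hv1 hv2.le,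
    root_node ι s hv1 hv2, Nat.add_sub_cancel]
  abel

end Folding

section Columns

variable {n v u : ℕ} {S : Finset ℕ}

/-- The number of entries of the column `S` that lie below the entry `v` when the column is
written downwards in increasing order; the box of `v` in `[S]_s` has the index
`s + numGreater S v`. -/
def numGreater (S : Finset ℕ) (v : ℕ) : ℕ := (S.filter (v < ·)).card

/-- The coefficient of the vertex `v` in the form of the column `S`, see `colForm_eq_sum`. -/
def edgeSign (S : Finset ℕ) (v : ℕ) : ℚ :=
  (if v ∈ S then 1 else 0) - (if v + 1 ∈ S then 1 else 0)

/-- The level at which the vertex `v` occurs in the form of the column `S`, see `colForm_eq_sum`. -/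
def colLevel (n : ℕ) (s : ℤ) (S : Finset ℕ) (v : ℕ) : ℤ := s + numGreater S v + (v - n : ℕ)

/-- The column tableau of the set of entries `S`. -/
noncomputable def colForm (ι : ℕ → ℕ) (n : ℕ) (s : ℤ) (S : Finset ℕ) : ℕ → ℚ :=
  ∑ v ∈ S, boxB ι n (s + numGreater S v) v

/-- The column obtained from `S` by exchanging the roles of the entries `v` and `v + 1`. -/
def swapAt (v : ℕ) (S : Finset ℕ) : Finset ℕ := S.map (Equiv.swap v (v + 1)).toEmbedding

theorem numGreater_eq_succ_add (S : Finset ℕ) (v : ℕ) :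
    numGreater S v = numGreater S (v + 1) + if v + 1 ∈ S then 1 else 0 := by
  have hunion : S.filter (v < ·) = S.filter (v + 1 < ·) ∪ S.filter (v + 1 = ·) := by
    rw [← Finset.filter_or]
    exact Finset.filter_congr fun w _ ↦ by omega
  have hdisj : Disjoint (S.filter (v + 1 < ·)) (S.filter (v + 1 = ·)) :=
    Finset.disjoint_filter.2 fun _ _ h ↦ h.ne
  rw [numGreater, numGreater, hunion, Finset.card_union_of_disjoint hdisj, Finset.filter_eq]
  split_ifs <;> simp

theorem edgeSign_eq_one_iff : edgeSign S v = 1 ↔ v ∈ S ∧ v + 1 ∉ S := by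
  unfold edgeSign
  split_ifs <;> norm_num [*]

theorem edgeSign_eq_neg_one_iff : edgeSign S v = -1 ↔ v ∉ S ∧ v + 1 ∈ S := by
  unfold edgeSign
  split_ifs <;> norm_num [*]

theorem edgeSign_trichotomy (S : Finset ℕ) (v : ℕ) :
    edgeSign S v = -1 ∨ edgeSign S v = 0 ∨ edgeSign S v = 1 := by
  unfold edgeSign
  split_ifs <;> simp

theorem colForm_eq_sum (ι : ℕ → ℕ) (s : ℤ) (hS : S ⊆ Finset.Icc 1 (2 * n)) :
    colForm ι n s S =
      ∑ v ∈ Finset.range (2 * n), edgeSign S v • coord ι n (colLevel n s S v) (node n v) := by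
  set G : ℕ → ℕ → ℚ := fun v ↦ coord ι n (colLevel n s S v) (node n v) with hG
  have hbox : ∀ v ∈ Finset.range (2 * n), v + 1 ∈ S →
      boxB ι n (s + numGreater S (v + 1)) (v + 1) = G (v + 1) - G v := fun v hv hvS ↦ by
    rw [boxB_eq_foldCoord_sub (v := v + 1) _ _ (by omega) (Finset.mem_range.1 hv), foldCoord,
      foldCoord]
    simp only [hG, colLevel, numGreater_eq_succ_add S v, if_pos hvS, Nat.add_sub_cancel]
    push_cast
    rw [add_assoc s, add_assoc s]
  have hshift : colForm ι n s S =
      ∑ v ∈ Finset.range (2 * n), if v + 1 ∈ S then G (v + 1) - G v else 0 := by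
    have hrange : S ⊆ Finset.range (2 * n + 1) := fun u hu ↦
      Finset.mem_range.2 (Nat.lt_succ_of_le (Finset.mem_Icc.1 (hS hu)).2)
    have h0 : 0 ∉ S := fun h ↦ by simpa using hS h
    calc
      colForm ι n s S = ∑ v ∈ Finset.range (2 * n + 1),
          if v ∈ S then boxB ι n (s + numGreater S v) v else 0 := by
        rw [Finset.sum_ite_mem, Finset.inter_eq_right.2 hrange, colForm]
      _ = _ := by
        rw [Finset.sum_range_succ', if_neg h0, add_zero]
        exact Finset.sum_congr rfl fun v hv ↦ if_ctx_congr Iff.rfl (hbox v hv) fun _ ↦ rfl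
  -- Abel summation; there are no coordinates at the ends `0` and `2n` of the folded diagram.
  have hG0 : G 0 = 0 := coord_eq_zero fun h ↦ absurd h.one_le (by simp [node])
  have hG2n : G (2 * n) = 0 := coord_eq_zero fun h ↦ absurd h.one_le (by simp [node])
  have htel := Finset.sum_range_sub (fun v ↦ if v ∈ S then G v else 0) (2 * n)
  simp only [hG0, hG2n, ite_self, sub_self] at htel
  rw [hshift]
  refine sub_eq_zero.1 (Eq.trans ?_ htel)
  rw [← Finset.sum_sub_distrib]
  refine Finset.sum_congr rfl fun v _ ↦ ?_
  rw [edgeSign]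
  split_ifs <;> simp [hG]

theorem mem_swapAt : u ∈ swapAt v S ↔ Equiv.swap v (v + 1) u ∈ S := by
  rw [swapAt, Finset.mem_map_equiv, Equiv.symm_swap]

theorem card_swapAt (v : ℕ) (S : Finset ℕ) : (swapAt v S).card = S.card := Finset.card_map _

theorem swapAt_swapAt (v : ℕ) (S : Finset ℕ) : swapAt v (swapAt v S) = S := by
  ext u
  rw [mem_swapAt, mem_swapAt, Equiv.swap_apply_self]

theorem left_mem_swapAt : v ∈ swapAt v S ↔ v + 1 ∈ S := by
  rw [mem_swapAt, Equiv.swap_apply_left]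

theorem right_mem_swapAt : v + 1 ∈ swapAt v S ↔ v ∈ S := by
  rw [mem_swapAt, Equiv.swap_apply_right]

theorem mem_swapAt_of_ne (hu : u ≠ v) (hu' : u ≠ v + 1) : u ∈ swapAt v S ↔ u ∈ S := by
  rw [mem_swapAt, Equiv.swap_apply_of_ne_of_ne hu hu']

theorem edgeSign_swapAt_self (S : Finset ℕ) (v : ℕ) :
    edgeSign (swapAt v S) v = -edgeSign S v := by
  simp only [edgeSign, left_mem_swapAt, right_mem_swapAt, neg_sub]

theorem edgeSign_swapAt_of_far (S : Finset ℕ) (huv : u + 1 < v ∨ v + 1 < u) :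
    edgeSign (swapAt v S) u = edgeSign S u := by
  rw [edgeSign, edgeSign]
  simp only [mem_swapAt_of_ne (show u ≠ v by omega) (show u ≠ v + 1 by omega),
    mem_swapAt_of_ne (show u + 1 ≠ v by omega) (show u + 1 ≠ v + 1 by omega)]

theorem numGreater_swapAt_of_ne (S : Finset ℕ) (huv : u ≠ v) :
    numGreater (swapAt v S) u = numGreater S u := by
  rw [numGreater, swapAt, Finset.filter_map, Finset.card_map, numGreater]
  congr 1
  refine Finset.filter_congr fun w _ ↦ ?_
  simp only [Function.comp_apply, Equiv.coe_toEmbedding, Equiv.swap_apply_def]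
  split_ifs <;> omega

theorem colLevel_swapAt_of_ne (s : ℤ) (S : Finset ℕ) (huv : u ≠ v) :
    colLevel n s (swapAt v S) u = colLevel n s S u := by
  rw [colLevel, numGreater_swapAt_of_ne S huv, colLevel]

theorem colLevel_swapAt_self (n : ℕ) (s : ℤ) (S : Finset ℕ) (v : ℕ) :
    (colLevel n s (swapAt v S) v : ℚ) = colLevel n s S v + edgeSign S v := by
  rw [colLevel, colLevel, numGreater_eq_succ_add, numGreater_eq_succ_add S,
    numGreater_swapAt_of_ne S (Nat.succ_ne_self v), edgeSign]
  simp only [right_mem_swapAt]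
  push_cast
  ring

theorem swapAt_eq_self (h : edgeSign S v = 0) : swapAt v S = S := by
  have hiff : v ∈ S ↔ v + 1 ∈ S := by
    unfold edgeSign at h
    split_ifs at h <;> simp_all
  ext u
  rw [mem_swapAt, Equiv.swap_apply_def]
  split_ifs with h1 h2
  · rw [h1, hiff]
  · rw [h2, hiff]
  · rfl

theorem colForm_swapAt_of_mem (ι : ℕ → ℕ) (s : ℤ) (hv1 : 1 ≤ v) (hv2 : v < 2 * n)
    (hv : v ∈ S) (hv' : v + 1 ∉ S) :
    colForm ι n s (swapAt v S) = colForm ι n s S - root ι n (colLevel n s S v) (node n v) := by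
  have hterm : ∀ u ∈ S,
      boxB ι n (s + numGreater (swapAt v S) (Equiv.swap v (v + 1) u)) (Equiv.swap v (v + 1) u) =
        boxB ι n (s + numGreater S u) u -
          if u = v then root ι n (colLevel n s S v) (node n v) else 0 := fun u hu ↦ by
    split_ifs with huv
    · rw [huv, Equiv.swap_apply_left, numGreater_swapAt_of_ne S (Nat.succ_ne_self v),
        numGreater_eq_succ_add S v, if_neg hv', add_zero, boxB_succ _ _ hv1 hv2, colLevel,
        numGreater_eq_succ_add S v, if_neg hv', add_zero]
    · rw [Equiv.swap_apply_of_ne_of_ne huv (ne_of_mem_of_not_mem hu hv'),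
        numGreater_swapAt_of_ne S huv, sub_zero]
  rw [colForm, swapAt, Finset.sum_map, ← swapAt]
  simp only [Equiv.coe_toEmbedding]
  rw [Finset.sum_congr rfl hterm, Finset.sum_sub_distrib, Finset.sum_ite_eq' S v, if_pos hv,
    colForm]

theorem colForm_swapAt (ι : ℕ → ℕ) (s : ℤ) (hv1 : 1 ≤ v) (hv2 : v < 2 * n) (S : Finset ℕ) :
    colForm ι n s (swapAt v S) =
      colForm ι n s S - edgeSign S v •
        root ι n (if 0 < edgeSign S v then colLevel n s S v else colLevel n s S v - 1)
          (node n v) := by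
  have hlevel := colLevel_swapAt_self n s S v
  rcases edgeSign_trichotomy S v with h | h | h
  · obtain ⟨hv, hv'⟩ := edgeSign_eq_neg_one_iff.1 h
    have hraise := colForm_swapAt_of_mem ι s hv1 hv2 (left_mem_swapAt.2 hv')
      (right_mem_swapAt.not.2 hv)
    have : colLevel n s (swapAt v S) v = colLevel n s S v - 1 := by
      rw [h] at hlevel
      exact_mod_cast hlevel
    rw [swapAt_swapAt, this] at hraise
    rw [hraise, h, if_neg (by norm_num)]
    simp
  · rw [swapAt_eq_self h, h, zero_smul, sub_zero]
  · obtain ⟨hv, hv'⟩ := edgeSign_eq_one_iff.1 h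
    rw [colForm_swapAt_of_mem ι s hv1 hv2 hv hv', h, if_pos one_pos, one_smul]

end Columns

section Operators

variable {ι : ℕ → ℕ} {n v : ℕ} {s t : ℤ} {S : Finset ℕ}

/-- The part of `edgeSign S v` seen at the level `t`. -/
def levelSign (n : ℕ) (s : ℤ) (S : Finset ℕ) (t : ℤ) (v : ℕ) : ℚ :=
  if colLevel n s S v = t then edgeSign S v else 0

/-- The data `(s, S)` of an element of `Tab_{B,ι}`, the column being encoded by its set `S` of
entries; the entry `v̄` is encoded as `2 * n + 1 - v`, as in `boxB`. -/
structure IsColumn (ι : ℕ → ℕ) (n : ℕ) (s : ℤ) (S : Finset ℕ) : Prop where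
  subset : S ⊆ Finset.Icc 1 (2 * n)
  nonempty : S.Nonempty
  card_le : S.card ≤ n
  le_level : 1 - (PABC ι n S.card : ℤ) ≤ s
  not_mem_bar : S.card = n → ∀ v ∈ S, 2 * n + 1 - v ∉ S

theorem colForm_apply (hadm : Admissible n ι) (hS : S ⊆ Finset.Icc 1 (2 * n)) (hv1 : 1 ≤ v)
    (hv2 : v < 2 * n) (hidx : IsIndex ι n t (node n v)) :
    colForm ι n s S (coordPos ι n t (node n v)) =
      ∑ u ∈ ({v, 2 * n - v} : Finset ℕ), levelSign n s S t u := by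
  have hpair : ({v, 2 * n - v} : Finset ℕ) =
      (Finset.range (2 * n)).filter (node n · = node n v) := by
    ext u
    simp only [Finset.mem_insert, Finset.mem_singleton, Finset.mem_filter, Finset.mem_range]
    unfold node
    omega
  rw [colForm_eq_sum ι s hS, Finset.sum_apply, hpair, Finset.sum_filter]
  refine Finset.sum_congr rfl fun u _ ↦ ?_
  rw [Pi.smul_apply, hidx.coord_apply hadm, levelSign]
  split_ifs <;> simp_all

theorem levelSign_trichotomy (n : ℕ) (s : ℤ) (S : Finset ℕ) (t : ℤ) (v : ℕ) :
    levelSign n s S t v = -1 ∨ levelSign n s S t v = 0 ∨ levelSign n s S t v = 1 := by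
  unfold levelSign
  split_ifs
  · exact edgeSign_trichotomy S v
  · simp

theorem levelSign_ne_zero (h : levelSign n s S t v ≠ 0) :
    colLevel n s S v = t ∧ levelSign n s S t v = edgeSign S v := by
  unfold levelSign at *
  split_ifs at * with ht
  · exact ⟨ht, rfl⟩
  · exact absurd rfl h

theorem swapAt_subset_Icc {m : ℕ} (hS : S ⊆ Finset.Icc 1 m) (hv1 : 1 ≤ v) (hv2 : v < m) :
    swapAt v S ⊆ Finset.Icc 1 m := fun u hu ↦ by
  have := Finset.mem_Icc.1 (hS (mem_swapAt.1 hu))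
  rw [Equiv.swap_apply_def] at this
  rw [Finset.mem_Icc]
  split_ifs at this <;> omega

theorem swap_reflect_bar {u : ℕ} (hu : u ≤ 2 * n) (hv : v ≤ 2 * n) :
    Equiv.swap (2 * n - v) (2 * n - v + 1) (2 * n + 1 - u) =
      2 * n + 1 - Equiv.swap v (v + 1) u := by
  rw [Equiv.swap_apply_def, Equiv.swap_apply_def]
  split_ifs <;> omega

namespace IsColumn

theorem mem_iff_bar_not_mem (h : IsColumn ι n s S) (hcard : S.card = n)
    (hv : v ∈ Finset.Icc 1 (2 * n)) : v ∈ S ↔ 2 * n + 1 - v ∉ S := by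
  refine ⟨h.not_mem_bar hcard v, fun hbar ↦ ?_⟩
  have hinj : Set.InjOn (2 * n + 1 - ·) (S : Set ℕ) := fun a ha b hb hab ↦ by
    have := Finset.mem_Icc.1 (h.subset ha)
    have := Finset.mem_Icc.1 (h.subset hb)
    simp only at hab
    omega
  have hdisj : Disjoint S (S.image (2 * n + 1 - ·)) := by
    rw [Finset.disjoint_right]
    simpa only [Finset.forall_mem_image] using h.not_mem_bar hcard
  have hsub : S ∪ S.image (2 * n + 1 - ·) ⊆ Finset.Icc 1 (2 * n) := by
    refine Finset.union_subset h.subset (Finset.image_subset_iff.2 fun u hu ↦ ?_)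
    have := Finset.mem_Icc.1 (h.subset hu)
    rw [Finset.mem_Icc]
    omega
  have hcover : S ∪ S.image (2 * n + 1 - ·) = Finset.Icc 1 (2 * n) := by
    refine Finset.eq_of_subset_of_card_le hsub ?_
    rw [Finset.card_union_of_disjoint hdisj, Finset.card_image_of_injOn hinj, Nat.card_Icc]
    omega
  rw [← hcover, Finset.mem_union, Finset.mem_image] at hv
  refine hv.resolve_right ?_
  rintro ⟨u, hu, rfl⟩
  have := Finset.mem_Icc.1 (h.subset hu)
  exact hbar (by rwa [Nat.sub_sub_self (by omega)])

theorem edgeSign_reflect (h : IsColumn ι n s S) (hcard : S.card = n) (hv1 : 1 ≤ v)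
    (hv2 : v < 2 * n) : edgeSign S (2 * n - v) = edgeSign S v := by
  have hv := h.mem_iff_bar_not_mem hcard (Finset.mem_Icc.2 ⟨hv1, hv2.le⟩)
  have hv' := h.mem_iff_bar_not_mem hcard (Finset.mem_Icc.2 ⟨Nat.le_add_left 1 v, hv2⟩)
  rw [show 2 * n + 1 - v = 2 * n - v + 1 by omega] at hv
  rw [Nat.add_sub_add_right] at hv'
  simp only [edgeSign, hv, hv']
  split_ifs <;> norm_num

theorem numGreater_sub_eq (h : IsColumn ι n s S) (hcard : S.card = n) {d : ℕ} (hd : d ≤ n) :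
    numGreater S (n - d) = numGreater S (n + d) + d := by
  induction d with
  | zero => rfl
  | succ d ih =>
    have hbar := h.mem_iff_bar_not_mem hcard (v := n - d) (Finset.mem_Icc.2 (by omega))
    rw [show 2 * n + 1 - (n - d) = n + d + 1 by omega] at hbar
    have hleft := numGreater_eq_succ_add S (n - (d + 1))
    have hright := numGreater_eq_succ_add S (n + d)
    rw [show n - (d + 1) + 1 = n - d by omega] at hleft
    have := ih (by omega)
    rw [← add_assoc, ← add_assoc]
    split_ifs at hleft hright <;> first | omega | tauto

theorem colLevel_reflect (h : IsColumn ι n s S) (hcard : S.card = n) (hv : v ≤ 2 * n) :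
    colLevel n s S (2 * n - v) = colLevel n s S v := by
  unfold colLevel
  rcases le_total v n with hvn | hvn
  · have := h.numGreater_sub_eq hcard (Nat.sub_le n v)
    rw [Nat.sub_sub_self hvn, show n + (n - v) = 2 * n - v by omega] at this
    omega
  · have := h.numGreater_sub_eq hcard (d := v - n) (by omega)
    rw [show n - (v - n) = 2 * n - v by omega, Nat.add_sub_cancel' hvn] at this
    omega

theorem levelSign_reflect (h : IsColumn ι n s S) (hcard : S.card = n) (hv1 : 1 ≤ v)
    (hv2 : v < 2 * n) : levelSign n s S t (2 * n - v) = levelSign n s S t v := by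
  rw [levelSign, h.colLevel_reflect hcard hv2.le, h.edgeSign_reflect hcard hv1 hv2, levelSign]

theorem swapAt_of_card_ne (h : IsColumn ι n s S) (hcard : S.card ≠ n) (hv1 : 1 ≤ v)
    (hv2 : v < 2 * n) : IsColumn ι n s (swapAt v S) where
  subset := swapAt_subset_Icc h.subset hv1 hv2
  nonempty := h.nonempty.map
  card_le := card_swapAt v S ▸ h.card_le
  le_level := card_swapAt v S ▸ h.le_level
  not_mem_bar hcard' := absurd (card_swapAt v S ▸ hcard') hcard

theorem swapAt_middle (h : IsColumn ι n s S) (hn : 1 ≤ n) : IsColumn ι n s (swapAt n S) where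
  subset := swapAt_subset_Icc h.subset hn (by omega)
  nonempty := h.nonempty.map
  card_le := card_swapAt n S ▸ h.card_le
  le_level := card_swapAt n S ▸ h.le_level
  not_mem_bar hcard u hu := by
    have hu' := (Finset.mem_Icc.1 (swapAt_subset_Icc h.subset hn (by omega) hu)).2
    have hbar := swap_reflect_bar (n := n) (v := n) hu' (by omega)
    rw [show 2 * n - n = n by omega] at hbar
    rw [mem_swapAt] at hu ⊢
    exact hbar ▸ h.not_mem_bar (card_swapAt n S ▸ hcard) _ hu

theorem swapAt_swapAt_reflect (h : IsColumn ι n s S) (hv1 : 1 ≤ v) (hv2 : v < 2 * n)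
    (hvn : v ≠ n) : IsColumn ι n s (swapAt (2 * n - v) (swapAt v S)) := by
  have hsub : swapAt (2 * n - v) (swapAt v S) ⊆ Finset.Icc 1 (2 * n) :=
    swapAt_subset_Icc (swapAt_subset_Icc h.subset hv1 hv2) (by omega) (by omega)
  have hcomm : Commute (Equiv.swap v (v + 1)) (Equiv.swap (2 * n - v) (2 * n - v + 1)) :=
    (Equiv.Perm.disjoint_swap_swap (by
      simp only [List.nodup_cons, List.mem_cons, List.not_mem_nil, List.nodup_nil, or_false,
        not_false_eq_true, and_true]
      omega)).commute
  refine ⟨hsub, h.nonempty.map.map, ?_, ?_, fun hcard u hu ↦ ?_⟩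
  · rw [card_swapAt, card_swapAt]
    exact h.card_le
  · rw [card_swapAt, card_swapAt]
    exact h.le_level
  · rw [card_swapAt, card_swapAt] at hcard
    have hu' := (Finset.mem_Icc.1 (hsub hu)).2
    have hswap : Equiv.swap v (v + 1) u ≤ 2 * n := by
      rw [Equiv.swap_apply_def]
      split_ifs <;> omega
    have hbar := swap_reflect_bar (v := 2 * n - v) hswap (by omega)
    rw [Nat.sub_sub_self hv2.le] at hbar
    rw [mem_swapAt, mem_swapAt] at hu ⊢
    rw [swap_reflect_bar hu' hv2.le, hbar, ← Equiv.Perm.mul_apply, ← hcomm.eq,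
      Equiv.Perm.mul_apply]
    exact h.not_mem_bar hcard _ hu

theorem card_le_add_numGreater (h : IsColumn ι n s S) (hv : v ∉ S) :
    S.card ≤ v - 1 + numGreater S v := by
  have hsub : S ⊆ Finset.Ico 1 v ∪ S.filter (v < ·) := fun u hu ↦ by
    have := Finset.mem_Icc.1 (h.subset hu)
    have := ne_of_mem_of_not_mem hu hv
    simp only [Finset.mem_union, Finset.mem_Ico, Finset.mem_filter, hu, true_and]
    omega
  calc
    S.card ≤ (Finset.Ico 1 v).card + numGreater S v :=
      (Finset.card_le_card hsub).trans (Finset.card_union_le _ _)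
    _ = v - 1 + numGreater S v := by rw [Nat.card_Ico]

theorem isIndex_of_edgeSign_neg (h : IsColumn ι n s S) (hv1 : 1 ≤ v) (hv2 : v < 2 * n)
    (hv : edgeSign S v = -1) : IsIndex ι n (colLevel n s S v - 1) (node n v) := by
  obtain ⟨hvS, hvS'⟩ := edgeSign_eq_neg_one_iff.1 hv
  have hpos := numGreater_eq_succ_add S v
  rw [if_pos hvS'] at hpos
  have hcard := h.card_le_add_numGreater hvS
  have hPcard : PABC ι n S.card + 1 ≤ numGreater S v + (v - n) + PABC ι n (node n v) := by
    rcases le_total S.card (node n v) with hle | hle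
    · have := (pabc_bounds (ι := ι) (n := n) hle (by unfold node; omega)).1
      omega
    · have := (pabc_bounds (ι := ι) hle h.card_le).2
      have := h.card_le
      unfold node at *
      omega
  have := h.le_level
  refine ⟨?_, ?_, ?_⟩
  · unfold node
    omega
  · unfold node
    omega
  · unfold colLevel
    omega

theorem sop_colForm (h : IsColumn ι n s S) (hadm : Admissible n ι)
    (hadap : Adapted n (cartanB n) ι) (hv1 : 1 ≤ v) (hv2 : v < 2 * n)
    (hidx : IsIndex ι n t (node n v)) {c : ℚ}
    (hc : ∑ u ∈ ({v, 2 * n - v} : Finset ℕ), levelSign n s S t u = c) :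
    Sop (cartanB n) ι (coordPos ι n t (node n v)) (colForm ι n s S) =
      colForm ι n s S - c • root ι n (if 0 < c then t else t - 1) (node n v) := by
  rw [← colForm_apply hadm h.subset hv1 hv2 hidx] at hc
  subst hc
  refine hidx.sop_coordPos hadm hadap fun hneg ↦ ?_
  rw [colForm_apply hadm h.subset hv1 hv2 hidx] at hneg
  obtain ⟨u, hu, hu0⟩ := Finset.exists_lt_of_sum_lt (hneg.trans_eq Finset.sum_const_zero.symm)
  obtain ⟨rfl, hsign⟩ := levelSign_ne_zero hu0.ne
  have hu1 : edgeSign S u = -1 := by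
    rcases edgeSign_trichotomy S u with h' | h' | h' <;> rw [hsign, h'] at hu0
    · exact h'
    · exact absurd hu0 (lt_irrefl 0)
    · exact absurd hu0 one_pos.not_gt
  rw [Finset.mem_insert, Finset.mem_singleton] at hu
  have hnode : node n u = node n v := by
    rcases hu with rfl | rfl
    · rfl
    · exact node_reflect hv2.le
  rw [← hnode]
  exact h.isIndex_of_edgeSign_neg (by omega) (by omega) hu1

theorem sop_colForm_eq_swapAt (h : IsColumn ι n s S) (hadm : Admissible n ι)
    (hadap : Adapted n (cartanB n) ι) (hv1 : 1 ≤ v) (hv2 : v < 2 * n)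
    (hidx : IsIndex ι n t (node n v)) (hv : levelSign n s S t v ≠ 0)
    (hv' : v = n ∨ levelSign n s S t (2 * n - v) = 0) :
    Sop (cartanB n) ι (coordPos ι n t (node n v)) (colForm ι n s S) =
      colForm ι n s (swapAt v S) := by
  obtain ⟨rfl, hsign⟩ := levelSign_ne_zero hv
  refine (h.sop_colForm hadm hadap hv1 hv2 hidx ?_).trans (colForm_swapAt ι s hv1 hv2 S).symm
  rw [← hsign]
  by_cases hvn : v = 2 * n - v
  · rw [← hvn, Finset.pair_eq_singleton, Finset.sum_singleton]
  · rw [Finset.sum_pair hvn, hv'.resolve_left (by omega), add_zero]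

theorem sop_colForm_eq_swapAt_swapAt (h : IsColumn ι n s S) (hadm : Admissible n ι)
    (hadap : Adapted n (cartanB n) ι) (hv1 : 1 ≤ v) (hv2 : v < 2 * n)
    (hidx : IsIndex ι n t (node n v)) (hvn : v ≠ n) (hv : levelSign n s S t v ≠ 0)
    (hv' : levelSign n s S t (2 * n - v) = levelSign n s S t v) :
    Sop (cartanB n) ι (coordPos ι n t (node n v)) (colForm ι n s S) =
      colForm ι n s (swapAt (2 * n - v) (swapAt v S)) := by
  obtain ⟨hlevel, hsign⟩ := levelSign_ne_zero hv
  obtain ⟨hlevel', hsign'⟩ := levelSign_ne_zero (hv'.trans_ne hv)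
  have hc : ∑ u ∈ ({v, 2 * n - v} : Finset ℕ), levelSign n s S t u =
      edgeSign S v + edgeSign S v := by
    rw [Finset.sum_pair (by omega), hv', hsign]
  have hpos : 0 < edgeSign S v + edgeSign S v ↔ 0 < edgeSign S v := by
    constructor <;> intro <;> linarith
  rw [h.sop_colForm hadm hadap hv1 hv2 hidx hc, colForm_swapAt ι s (by omega) (by omega),
    colForm_swapAt ι s hv1 hv2, edgeSign_swapAt_of_far S (by omega),
    colLevel_swapAt_of_ne s S (by omega), node_reflect hv2.le, ← hsign', hv', hsign, hlevel,
    hlevel', if_congr hpos rfl rfl, add_smul, sub_sub]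

end IsColumn

end Operators

section Reachability

variable {ι : ℕ → ℕ} {n v : ℕ} {s t : ℤ} {S : Finset ℕ}

theorem IsColumn.exists_sop_colForm_eq (h : IsColumn ι n s S) (hadm : Admissible n ι)
    (hadap : Adapted n (cartanB n) ι) {k : ℕ} (hk : 1 ≤ k) :
    ∃ S', IsColumn ι n s S' ∧ Sop (cartanB n) ι k (colForm ι n s S) = colForm ι n s S' := by
  obtain ⟨t, j, hidx, rfl⟩ := exists_coordPos_eq hadm hk
  obtain ⟨v, hv1, hv2, rfl⟩ : ∃ v, 1 ≤ v ∧ v < 2 * n ∧ node n v = j :=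
    ⟨j, hidx.one_le, by have := hidx.one_le; have := hidx.le; omega, node_of_le hidx.le⟩
  by_cases hc : ∑ u ∈ ({v, 2 * n - v} : Finset ℕ), levelSign n s S t u = 0
  · exact ⟨S, h, by rw [h.sop_colForm hadm hadap hv1 hv2 hidx hc, zero_smul, sub_zero]⟩
  by_cases hvn : v = n
  · subst hvn
    rw [show 2 * v - v = v by omega, Finset.pair_eq_singleton, Finset.sum_singleton] at hc
    exact ⟨_, h.swapAt_middle hv1, h.sop_colForm_eq_swapAt hadm hadap hv1 hv2 hidx hc (.inl rfl)⟩
  rw [Finset.sum_pair (by omega)] at hc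
  by_cases heq : levelSign n s S t (2 * n - v) = levelSign n s S t v
  · have hv : levelSign n s S t v ≠ 0 := fun h0 ↦ hc (by rw [heq, h0, add_zero])
    exact ⟨_, h.swapAt_swapAt_reflect hv1 hv2 hvn,
      h.sop_colForm_eq_swapAt_swapAt hadm hadap hv1 hv2 hidx hvn hv heq⟩
  have hcard : S.card ≠ n := fun hcard ↦ heq (h.levelSign_reflect hcard hv1 hv2)
  have hw1 : 1 ≤ 2 * n - v := by omega
  have hw2 : 2 * n - v < 2 * n := by omega
  by_cases hv : levelSign n s S t v = 0
  · rw [← node_reflect hv2.le] at hidx ⊢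
    refine ⟨_, h.swapAt_of_card_ne hcard hw1 hw2,
      h.sop_colForm_eq_swapAt hadm hadap hw1 hw2 hidx (hv ▸ heq) (.inr ?_)⟩
    rwa [Nat.sub_sub_self hv2.le]
  · refine ⟨_, h.swapAt_of_card_ne hcard hv1 hv2,
      h.sop_colForm_eq_swapAt hadm hadap hv1 hv2 hidx hv (.inr ?_)⟩
    rcases levelSign_trichotomy n s S t v with hv' | hv' | hv' <;>
      rcases levelSign_trichotomy n s S t (2 * n - v) with hw' | hw' | hw' <;>
      simp_all

theorem colForm_Icc (ι : ℕ → ℕ) (s : ℤ) {k : ℕ} (hk1 : 1 ≤ k) (hkn : k ≤ n) :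
    colForm ι n s (Finset.Icc 1 k) = coord ι n s k := by
  have hgreater : numGreater (Finset.Icc 1 k) k = 0 := by
    rw [numGreater, Finset.card_eq_zero, Finset.filter_eq_empty_iff]
    exact fun u hu ↦ (Finset.mem_Icc.1 hu).2.not_gt
  have hother : ∀ v ∈ Finset.range (2 * n), v ≠ k →
      edgeSign (Finset.Icc 1 k) v •
        coord ι n (colLevel n s (Finset.Icc 1 k) v) (node n v) = 0 := fun v _ hvk ↦ by
    rcases Nat.eq_zero_or_pos v with rfl | hv
    · rw [node_of_le (Nat.zero_le n), coord_zero, smul_zero]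
    · have hiff : v ∈ Finset.Icc 1 k ↔ v + 1 ∈ Finset.Icc 1 k := by
        rw [Finset.mem_Icc, Finset.mem_Icc]
        omega
      rw [edgeSign, if_congr hiff rfl rfl, sub_self, zero_smul]
  have hsign : edgeSign (Finset.Icc 1 k) k = 1 :=
    edgeSign_eq_one_iff.2 ⟨Finset.right_mem_Icc.2 hk1, by simp⟩
  rw [colForm_eq_sum ι s (Finset.Icc_subset_Icc_right (by omega)),
    Finset.sum_eq_single_of_mem k (Finset.mem_range.2 (by omega)) hother, hsign, one_smul,
    colLevel, hgreater, Nat.sub_eq_zero_of_le hkn, Nat.cast_zero, add_zero, add_zero,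
    node_of_le hkn]

theorem IsIndex.isColumn_Icc {k : ℕ} (h : IsIndex ι n s k) :
    IsColumn ι n s (Finset.Icc 1 k) where
  subset := Finset.Icc_subset_Icc_right (by have := h.le; omega)
  nonempty := Finset.nonempty_Icc.2 h.one_le
  card_le := by
    rw [Nat.card_Icc, Nat.add_sub_cancel]
    exact h.le
  le_level := by
    rw [Nat.card_Icc, Nat.add_sub_cancel]
    have := h.one_le_add
    omega
  not_mem_bar _ v hv := by
    have := h.le
    rw [Finset.mem_Icc] at hv ⊢
    omega

theorem Icc_subset_of_mem {m u : ℕ} (hS : ∀ u, 1 ≤ u → u < m → u + 1 ∈ S → u ∈ S) (hu : u ∈ S)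
    (hum : u ≤ m) : Finset.Icc 1 u ⊆ S := by
  induction u with
  | zero => simp
  | succ u ih =>
    intro w hw
    rw [Finset.mem_Icc] at hw
    rcases hw.2.eq_or_lt with rfl | hwu
    · exact hu
    · exact ih (hS u (by omega) hum hu) (by omega) (Finset.mem_Icc.2 (by omega))

theorem exists_eq_Icc (hS1 : S ⊆ Finset.Icc 1 n) (hS : ∀ u, 1 ≤ u → u + 1 ∈ S → u ∈ S) :
    ∃ k, S = Finset.Icc 1 k := by
  rcases S.eq_empty_or_nonempty with rfl | hne
  · exact ⟨0, by simp⟩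
  · refine ⟨S.max' hne, Finset.Subset.antisymm (fun u hu ↦ Finset.mem_Icc.2 ?_)
      (Icc_subset_of_mem (fun u hu _ ↦ hS u hu) (S.max'_mem hne) le_rfl)⟩
    exact ⟨(Finset.mem_Icc.1 (hS1 hu)).1, S.le_max' u hu⟩

theorem exists_minimal_ascent (hasc : ∃ v, 1 ≤ v ∧ v ∉ S ∧ v + 1 ∈ S) :
    ∃ v, (1 ≤ v ∧ v ∉ S ∧ v + 1 ∈ S) ∧ ∀ u, 1 ≤ u → u < v → u + 1 ∈ S → u ∈ S := by
  classical
  exact ⟨Nat.find hasc, Nat.find_spec hasc, fun u hu huv huS ↦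
    of_not_not fun hu' ↦ Nat.find_min hasc huv ⟨hu, hu', huS⟩⟩

theorem sum_swapAt_add {M : Type*} [AddCommMonoid M] (f : ℕ → M) (hv : v ∉ S) (hv' : v + 1 ∈ S) :
    ∑ u ∈ swapAt v S, f u + f (v + 1) = ∑ u ∈ S, f u + f v := by
  have hrest : ∑ u ∈ S.erase (v + 1), f (Equiv.swap v (v + 1) u) = ∑ u ∈ S.erase (v + 1), f u := by
    refine Finset.sum_congr rfl fun u hu ↦ ?_
    rw [Finset.mem_erase] at hu
    rw [Equiv.swap_apply_of_ne_of_ne (ne_of_mem_of_not_mem hu.2 hv) hu.1]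
  rw [swapAt, Finset.sum_map, ← Finset.add_sum_erase S _ hv', ← Finset.add_sum_erase S f hv']
  simp only [Equiv.coe_toEmbedding, Equiv.swap_apply_right]
  rw [hrest, add_right_comm, add_comm (f v), add_right_comm]

/-- The quantity that decreases along the descent of `IsColumn.exists_weight_lt`: unbarred entries
count twice, so that lowering one of them outweighs raising a barred one. -/
def weight (n : ℕ) (S : Finset ℕ) : ℕ := ∑ u ∈ S, (u + min u n)

theorem weight_swapAt (n : ℕ) (hv : v ∉ S) (hv' : v + 1 ∈ S) :
    weight n (swapAt v S) + (if v < n then 2 else 1) = weight n S := by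
  have := sum_swapAt_add (fun u ↦ u + min u n) hv hv'
  unfold weight
  split_ifs <;> omega

theorem weight_swapAt_lt (n : ℕ) (hv : v ∉ S) (hv' : v + 1 ∈ S) :
    weight n (swapAt v S) < weight n S := by
  have := weight_swapAt n hv hv'
  split_ifs at this <;> omega

theorem weight_swapAt_swapAt_lt (hvn : v < n) (hv : edgeSign S v = -1)
    (hw : edgeSign S (2 * n - v) = 1) :
    weight n (swapAt (2 * n - v) (swapAt v S)) < weight n S := by
  obtain ⟨hvS, hvS'⟩ := edgeSign_eq_neg_one_iff.1 hv
  obtain ⟨hwS, hwS'⟩ :=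
    edgeSign_eq_one_iff.1 ((edgeSign_swapAt_of_far (v := v) S (by omega)).trans hw)
  have hlower := weight_swapAt n hvS hvS'
  have hraise := weight_swapAt n (left_mem_swapAt.not.2 hwS') (right_mem_swapAt.2 hwS)
  rw [if_pos hvn] at hlower
  rw [swapAt_swapAt, if_neg (by omega)] at hraise
  omega

theorem XiMem.of_sop_coordPos_eq (hadm : Admissible n ι) {φ ψ : ℕ → ℚ} {j : ℕ}
    (hφ : XiMem (cartanB n) ι φ) (hidx : IsIndex ι n t j)
    (heq : Sop (cartanB n) ι (coordPos ι n t j) φ = ψ) : XiMem (cartanB n) ι ψ :=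
  heq ▸ .step _ (hidx.one_le_coordPos hadm) _ hφ

theorem levelSign_swapAt_of_edgeSign_neg (hv : edgeSign S v = -1) :
    levelSign n s (swapAt v S) (colLevel n s S v - 1) v = 1 := by
  have hlevel := colLevel_swapAt_self n s S v
  rw [hv] at hlevel
  rw [levelSign, if_pos (by exact_mod_cast hlevel), edgeSign_swapAt_self, hv, neg_neg]

theorem levelSign_swapAt_of_far {u : ℕ} (huv : u + 1 < v ∨ v + 1 < u) :
    levelSign n s (swapAt v S) t u = levelSign n s S t u := by
  rw [levelSign, colLevel_swapAt_of_ne s S (by omega), edgeSign_swapAt_of_far S huv, levelSign]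

theorem colForm_swapAt_swapAt_of_levelSign_reflect_eq_one (ι : ℕ → ℕ) (hv1 : 1 ≤ v)
    (hv2 : v < 2 * n) (hvn : v ≠ n) (hv : edgeSign S v = -1)
    (hw : levelSign n s S (colLevel n s S v - 1) (2 * n - v) = 1) :
    colForm ι n s (swapAt (2 * n - v) (swapAt v S)) = colForm ι n s S := by
  obtain ⟨hlevel, hsign⟩ := levelSign_ne_zero (hw.trans_ne one_ne_zero)
  rw [colForm_swapAt ι s (by omega) (by omega), colForm_swapAt ι s hv1 hv2,
    edgeSign_swapAt_of_far S (by omega), colLevel_swapAt_of_ne s S (by omega),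
    node_reflect hv2.le, ← hsign, hw, hv, hlevel, if_pos one_pos, if_neg (by norm_num)]
  simp

namespace IsColumn

theorem xiMem_of_swapAt (h : IsColumn ι n s S) (hadm : Admissible n ι)
    (hadap : Adapted n (cartanB n) ι) (hv1 : 1 ≤ v) (hv2 : v < 2 * n) (hv : edgeSign S v = -1)
    (hcol : IsColumn ι n s (swapAt v S))
    (hw : v = n ∨ levelSign n s S (colLevel n s S v - 1) (2 * n - v) = 0)
    (hXi : XiMem (cartanB n) ι (colForm ι n s (swapAt v S))) :
    XiMem (cartanB n) ι (colForm ι n s S) := by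
  have hidx := h.isIndex_of_edgeSign_neg hv1 hv2 hv
  have hsign := levelSign_swapAt_of_edgeSign_neg (n := n) (s := s) hv
  refine hXi.of_sop_coordPos_eq hadm hidx ?_
  rw [hcol.sop_colForm_eq_swapAt hadm hadap hv1 hv2 hidx (hsign.trans_ne one_ne_zero),
    swapAt_swapAt]
  exact or_iff_not_imp_left.2 fun hvn ↦
    (levelSign_swapAt_of_far (by omega)).trans (hw.resolve_left hvn)

theorem xiMem_of_swapAt_swapAt (h : IsColumn ι n s S) (hadm : Admissible n ι)
    (hadap : Adapted n (cartanB n) ι) (hcard : S.card = n) (hv1 : 1 ≤ v) (hv2 : v < 2 * n)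
    (hvn : v ≠ n) (hv : edgeSign S v = -1)
    (hXi : XiMem (cartanB n) ι (colForm ι n s (swapAt (2 * n - v) (swapAt v S)))) :
    XiMem (cartanB n) ι (colForm ι n s S) := by
  set w := 2 * n - v
  have hcol : IsColumn ι n s (swapAt w (swapAt v S)) := h.swapAt_swapAt_reflect hv1 hv2 hvn
  have hsign_v : levelSign n s (swapAt w (swapAt v S)) (colLevel n s S v - 1) v = 1 := by
    rw [levelSign_swapAt_of_far (by omega)]
    exact levelSign_swapAt_of_edgeSign_neg hv
  have hsign_w : levelSign n s (swapAt w (swapAt v S)) (colLevel n s S v - 1) w = 1 := by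
    have hlevel : colLevel n s (swapAt v S) w = colLevel n s S v :=
      (colLevel_swapAt_of_ne s S (by omega)).trans (h.colLevel_reflect hcard hv2.le)
    have hedge : edgeSign (swapAt v S) w = -1 :=
      (edgeSign_swapAt_of_far S (by omega)).trans ((h.edgeSign_reflect hcard hv1 hv2).trans hv)
    exact hlevel ▸ levelSign_swapAt_of_edgeSign_neg hedge
  have hidx : IsIndex ι n (colLevel n s S v - 1) (node n w) :=
    node_reflect (n := n) hv2.le ▸ h.isIndex_of_edgeSign_neg hv1 hv2 hv
  have hwv : 2 * n - w = v := Nat.sub_sub_self hv2.le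
  refine hXi.of_sop_coordPos_eq hadm hidx ?_
  rw [hcol.sop_colForm_eq_swapAt_swapAt hadm hadap (by omega) (by omega) hidx (by omega)
      (hsign_w.trans_ne one_ne_zero) (by rw [hwv, hsign_v, hsign_w]),
    hwv, swapAt_swapAt, swapAt_swapAt]

theorem lt_of_levelSign_reflect_eq_one (h : IsColumn ι n s S) (hcard : S.card ≠ n) (hvn : v ≠ n)
    (hv2 : v < 2 * n) (hvS' : v + 1 ∈ S) (hmin : ∀ u, 1 ≤ u → u < v → u + 1 ∈ S → u ∈ S)
    (hw : levelSign n s S (colLevel n s S v - 1) (2 * n - v) = 1) : v < n := by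
  obtain ⟨hlevel, hsign⟩ := levelSign_ne_zero (hw.trans_ne one_ne_zero)
  obtain ⟨hwS, hwS'⟩ := edgeSign_eq_one_iff.1 (hsign.symm.trans hw)
  by_contra! hle
  have hgap : ∀ u ∈ S, 2 * n - v < u ↔ v < u := fun u hu ↦
    ⟨fun hwu ↦ by
      by_contra! huv
      exact hwS' (Icc_subset_of_mem hmin hu huv (Finset.mem_Icc.2 (by omega))), by omega⟩
  have hgreater : numGreater S (2 * n - v) = numGreater S v :=
    congrArg Finset.card (Finset.filter_congr hgap)
  have hv : v = n + 1 := by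
    unfold colLevel at hlevel
    omega
  have hsub : insert (v + 1) (Finset.Icc 1 (2 * n - v)) ⊆ S :=
    Finset.insert_subset hvS' (Icc_subset_of_mem hmin hwS (by omega))
  have hle_card := Finset.card_le_card hsub
  rw [Finset.card_insert_of_notMem (by rw [Finset.mem_Icc]; omega), Nat.card_Icc] at hle_card
  have := h.card_le
  omega

theorem exists_weight_lt (h : IsColumn ι n s S) (hadm : Admissible n ι)
    (hadap : Adapted n (cartanB n) ι) (hasc : ∃ v, 1 ≤ v ∧ v ∉ S ∧ v + 1 ∈ S) :
    ∃ S', IsColumn ι n s S' ∧ weight n S' < weight n S ∧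
      (XiMem (cartanB n) ι (colForm ι n s S') → XiMem (cartanB n) ι (colForm ι n s S)) := by
  -- Taking `v` minimal forces `v < n` when the edge `2n - v` cancels it, so that the weight drops.
  obtain ⟨v, ⟨hv1, hvS, hvS'⟩, hmin⟩ := exists_minimal_ascent hasc
  have hv2 : v < 2 * n := (Finset.mem_Icc.1 (h.subset hvS')).2
  have hv := edgeSign_eq_neg_one_iff.2 ⟨hvS, hvS'⟩
  by_cases hvn : v = n
  · have hcol : IsColumn ι n s (swapAt v S) := hvn ▸ h.swapAt_middle (hvn ▸ hv1)
    exact ⟨_, hcol, weight_swapAt_lt n hvS hvS',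
      h.xiMem_of_swapAt hadm hadap hv1 hv2 hv hcol (.inl hvn)⟩
  by_cases hcard : S.card = n
  · obtain ⟨hwS, hwS'⟩ := edgeSign_eq_neg_one_iff.1 <|
      (edgeSign_swapAt_of_far (v := v) S (by omega)).trans
        ((h.edgeSign_reflect hcard hv1 hv2).trans hv)
    exact ⟨_, h.swapAt_swapAt_reflect hv1 hv2 hvn,
      (weight_swapAt_lt n hwS hwS').trans (weight_swapAt_lt n hvS hvS'),
      h.xiMem_of_swapAt_swapAt hadm hadap hcard hv1 hv2 hvn hv⟩
  have hw1 : 1 ≤ 2 * n - v := by omega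
  have hw2 : 2 * n - v < 2 * n := by omega
  rcases levelSign_trichotomy n s S (colLevel n s S v - 1) (2 * n - v) with hw | hw | hw
  · obtain ⟨hlevel, hsign⟩ := levelSign_ne_zero (hw.trans_ne (by norm_num))
    have hcol := h.swapAt_of_card_ne hcard hw1 hw2
    obtain ⟨hwS, hwS'⟩ := edgeSign_eq_neg_one_iff.1 (hsign.symm.trans hw)
    refine ⟨_, hcol, weight_swapAt_lt n hwS hwS',
      h.xiMem_of_swapAt hadm hadap hw1 hw2 (hsign.symm.trans hw) hcol (.inr ?_)⟩
    rw [Nat.sub_sub_self hv2.le, hlevel, levelSign, if_neg (by omega)]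
  · have hcol := h.swapAt_of_card_ne hcard hv1 hv2
    exact ⟨_, hcol, weight_swapAt_lt n hvS hvS',
      h.xiMem_of_swapAt hadm hadap hv1 hv2 hv hcol (.inr hw)⟩
  · have hsign := (levelSign_ne_zero (hw.trans_ne one_ne_zero)).2.symm.trans hw
    refine ⟨_, h.swapAt_swapAt_reflect hv1 hv2 hvn,
      weight_swapAt_swapAt_lt (h.lt_of_levelSign_reflect_eq_one hcard hvn hv2 hvS' hmin hw) hv
        hsign, ?_⟩
    rw [colForm_swapAt_swapAt_of_levelSign_reflect_eq_one ι hv1 hv2 hvn hv hw]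
    exact id

theorem xiMem_colForm (h : IsColumn ι n s S) (hadm : Admissible n ι)
    (hadap : Adapted n (cartanB n) ι) : XiMem (cartanB n) ι (colForm ι n s S) := by
  induction hm : weight n S using Nat.strong_induction_on generalizing S with
  | _ m ih =>
  by_cases hasc : ∃ v, 1 ≤ v ∧ v ∉ S ∧ v + 1 ∈ S
  · obtain ⟨S', hS', hlt, himp⟩ := h.exists_weight_lt hadm hadap hasc
    exact himp (ih _ (hm ▸ hlt) hS' rfl)
  · push Not at hasc
    obtain ⟨k, rfl⟩ := exists_eq_Icc h.subset fun u hu ↦ not_imp_not.1 (hasc u hu)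
    have hk := h.card_le
    have hs := h.le_level
    have hk1 := Finset.nonempty_Icc.1 h.nonempty
    rw [Nat.card_Icc, Nat.add_sub_cancel] at hk hs
    have hidx : IsIndex ι n s k := ⟨hk1, hk, by omega⟩
    rw [colForm_Icc ι s hk1 hk, hidx.coord_eq]
    exact .base _ (hidx.one_le_coordPos hadm)

end IsColumn

end Reachability

section Tableaux

variable {ι : ℕ → ℕ} {n : ℕ} {s : ℤ} {S : Finset ℕ}

theorem exists_isColumn_of_xiMem (hadm : Admissible n ι) (hadap : Adapted n (cartanB n) ι)
    {φ : ℕ → ℚ} (hφ : XiMem (cartanB n) ι φ) :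
    ∃ s S, IsColumn ι n s S ∧ φ = colForm ι n s S := by
  induction hφ with
  | base k hk =>
    obtain ⟨t, j, hidx, rfl⟩ := exists_coordPos_eq hadm hk
    exact ⟨t, _, hidx.isColumn_Icc, by rw [colForm_Icc ι t hidx.one_le hidx.le, hidx.coord_eq]⟩
  | step k hk φ _ ih =>
    obtain ⟨s, S, hS, rfl⟩ := ih
    obtain ⟨S', hS', heq⟩ := hS.exists_sop_colForm_eq hadm hadap hk
    exact ⟨s, S', hS', heq⟩

theorem numGreater_image {j : ℕ → ℕ} {k i : ℕ} (hj : StrictMonoOn j (Set.Icc 1 k))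
    (hi : i ∈ Finset.Icc 1 k) : numGreater ((Finset.Icc 1 k).image j) (j i) = k - i := by
  rw [← Finset.coe_Icc] at hj
  have hfilter : (Finset.Icc 1 k).filter (j i < j ·) = Finset.Ioc i k := by
    ext u
    rw [Finset.mem_filter, Finset.mem_Ioc]
    constructor
    · rintro ⟨hu, hlt⟩
      exact ⟨(hj.lt_iff_lt hi hu).1 hlt, (Finset.mem_Icc.1 hu).2⟩
    · rintro ⟨hiu, huk⟩
      have hu : u ∈ Finset.Icc 1 k := Finset.mem_Icc.2 (by omega)
      exact ⟨hu, (hj.lt_iff_lt hi hu).2 hiu⟩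
  rw [numGreater, Finset.filter_image, hfilter, Finset.card_image_of_injOn, Nat.card_Ioc]
  refine hj.injOn.mono fun u hu ↦ ?_
  have := Finset.mem_Icc.1 hi
  simp only [Finset.coe_Ioc, Finset.coe_Icc, Set.mem_Ioc, Set.mem_Icc] at hu ⊢
  omega

theorem colForm_image (ι : ℕ → ℕ) (n : ℕ) (s : ℤ) {j : ℕ → ℕ} {k : ℕ}
    (hj : StrictMonoOn j (Set.Icc 1 k)) :
    colForm ι n s ((Finset.Icc 1 k).image j) = tab (boxB ι n) s k j := by
  rw [colForm, tab, Finset.sum_image (by simpa using hj.injOn)]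
  refine Finset.sum_congr rfl fun i hi ↦ ?_
  rw [numGreater_image hj hi, Nat.cast_sub (Finset.mem_Icc.1 hi).2, add_sub_assoc]

theorem exists_image_Icc_eq (S : Finset ℕ) :
    ∃ j : ℕ → ℕ, StrictMonoOn j (Set.Icc 1 S.card) ∧ (Finset.Icc 1 S.card).image j = S := by
  have hmono := Nat.nth_strictMonoOn S.finite_toSet
  have himage := Nat.image_nth_Iio_card S.finite_toSet
  rw [Finset.finite_toSet_toFinset] at hmono himage
  have hmaps : Set.MapsTo (· - 1) (Set.Icc 1 S.card) (Set.Iio S.card) := fun i hi ↦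
    (Nat.sub_lt hi.1 one_pos).trans_le hi.2
  refine ⟨fun i ↦ Nat.nth (· ∈ S) (i - 1), fun a ha b hb hab ↦ ?_, Finset.coe_injective ?_⟩
  · exact hmono (hmaps ha) (hmaps hb) (Nat.sub_lt_sub_right ha.1 hab)
  · have hsurj : (· - 1) '' Set.Icc 1 S.card = Set.Iio S.card :=
      hmaps.image_subset.antisymm fun i hi ↦
        ⟨i + 1, ⟨Nat.le_add_left 1 i, hi⟩, Nat.add_sub_cancel ..⟩
    rw [Finset.coe_image, Finset.coe_Icc, ← Set.image_image (Nat.nth (· ∈ S)), hsurj]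
    exact himage

theorem absJ_eq_absJ_iff {a b : ℕ} (ha : a ∈ Finset.Icc 1 (2 * n)) (hb : b ∈ Finset.Icc 1 (2 * n))
    (hab : a ≠ b) : absJ n a = absJ n b ↔ b = 2 * n + 1 - a := by
  rw [Finset.mem_Icc] at ha hb
  unfold absJ
  split_ifs <;> omega

theorem absJ_ne_iff_bar_not_mem {j : ℕ → ℕ} {k : ℕ} (hj : StrictMonoOn j (Set.Icc 1 k))
    (hsub : (Finset.Icc 1 k).image j ⊆ Finset.Icc 1 (2 * n)) :
    (∀ l m, 1 ≤ l → l < m → m ≤ k → absJ n (j l) ≠ absJ n (j m)) ↔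
      ∀ v ∈ (Finset.Icc 1 k).image j, 2 * n + 1 - v ∉ (Finset.Icc 1 k).image j := by
  have hmem : ∀ {i}, 1 ≤ i → i ≤ k → j i ∈ (Finset.Icc 1 k).image j := fun h1 hk ↦
    Finset.mem_image_of_mem j (Finset.mem_Icc.2 ⟨h1, hk⟩)
  have hiff : ∀ {l m}, 1 ≤ l → l < m → m ≤ k →
      (absJ n (j l) = absJ n (j m) ↔ j m = 2 * n + 1 - j l) := fun hl hlm hm ↦
    absJ_eq_absJ_iff (hsub (hmem hl (hlm.le.trans hm))) (hsub (hmem (hl.trans hlm.le) hm))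
      (hj ⟨hl, hlm.le.trans hm⟩ ⟨hl.trans hlm.le, hm⟩ hlm).ne
  constructor
  · refine fun hne v hv hbar ↦ ?_
    obtain ⟨l, hl, rfl⟩ := Finset.mem_image.1 hv
    obtain ⟨m, hm, heq⟩ := Finset.mem_image.1 hbar
    have hbound := Finset.mem_Icc.1 (hsub hv)
    rw [Finset.mem_Icc] at hl hm
    rcases lt_trichotomy l m with hlm | rfl | hml
    · exact hne l m hl.1 hlm hm.2 ((hiff hl.1 hlm hm.2).2 heq)
    · omega
    · exact hne m l hm.1 hml hl.2 ((hiff hm.1 hml hl.2).2 (by omega))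
  · intro hbar l m hl hlm hm heq
    exact hbar _ (hmem hl (hlm.le.trans hm)) ((hiff hl hlm hm).1 heq ▸ hmem (hl.trans hlm.le) hm)

theorem isColumn_image_iff {j : ℕ → ℕ} {k : ℕ} (hj : StrictMonoOn j (Set.Icc 1 k)) :
    IsColumn ι n s ((Finset.Icc 1 k).image j) ↔
      1 ≤ k ∧ k ≤ n ∧ (∀ i, 1 ≤ i → i ≤ k → 1 ≤ j i ∧ j i ≤ 2 * n) ∧
        (k = n → ∀ l m, 1 ≤ l → l < m → m ≤ k → absJ n (j l) ≠ absJ n (j m)) ∧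
        1 - (PABC ι n k : ℤ) ≤ s := by
  have hcard : ((Finset.Icc 1 k).image j).card = k := by
    rw [Finset.card_image_of_injOn (by simpa using hj.injOn), Nat.card_Icc, Nat.add_sub_cancel]
  have hsub : (Finset.Icc 1 k).image j ⊆ Finset.Icc 1 (2 * n) ↔
      ∀ i, 1 ≤ i → i ≤ k → 1 ≤ j i ∧ j i ≤ 2 * n := by
    simp only [Finset.image_subset_iff, Finset.mem_Icc, and_imp]
  constructor
  · rintro ⟨hS, hne, hle, hlevel, hbar⟩
    rw [hcard] at hle hlevel hbar
    exact ⟨Finset.nonempty_Icc.1 (Finset.image_nonempty.1 hne), hle, hsub.1 hS,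
      fun hkn ↦ (absJ_ne_iff_bar_not_mem hj hS).2 (hbar hkn), hlevel⟩
  · rintro ⟨hk1, hkn, hbound, habs, hlevel⟩
    have hS := hsub.2 hbound
    refine ⟨hS, (Finset.nonempty_Icc.2 hk1).image j, by rwa [hcard], by rwa [hcard], ?_⟩
    rw [hcard]
    exact fun hkn ↦ (absJ_ne_iff_bar_not_mem hj hS).1 (habs hkn)

theorem mem_tabB_iff {φ : ℕ → ℚ} :
    φ ∈ TabB ι n ↔ ∃ s S, IsColumn ι n s S ∧ φ = colForm ι n s S := by
  constructor
  · rintro ⟨k, s, j, hk1, hkn, hbound, hmono, hbar, hlevel, rfl⟩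
    have hj : StrictMonoOn j (Set.Icc 1 k) :=
      strictMonoOn_of_lt_add_one Set.ordConnected_Icc fun i _ hi hi' ↦ hmono i hi.1 hi'.2
    exact ⟨s, _, (isColumn_image_iff hj).2 ⟨hk1, hkn, hbound, hbar, hlevel⟩,
      (colForm_image ι n s hj).symm⟩
  · rintro ⟨s, S, hS, rfl⟩
    obtain ⟨j, hj, hjS⟩ := exists_image_Icc_eq S
    obtain ⟨hk1, hkn, hbound, hbar, hlevel⟩ := (isColumn_image_iff hj).1 (hjS.symm ▸ hS)
    refine ⟨S.card, s, j, hk1, hkn, hbound, fun i h1 hi ↦ ?_, hbar, hlevel, ?_⟩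
    · exact hj ⟨h1, hi.le⟩ ⟨Nat.le_add_left 1 i, hi⟩ (Nat.lt_succ_self i)
    · rw [← colForm_image ι n s hj, hjS]

end Tableaux

/-- Theorem 3.5 (type B): for an adapted sequence, `Ξ_ι = Tab_{B,ι}`. -/
theorem XiEqTabB (n : ℕ) (hn : 2 ≤ n) (ι : ℕ → ℕ)
    (hadm : Admissible n ι) (hadap : Adapted n (cartanB n) ι) :
    Xi (cartanB n) ι = TabB ι n := by
  ext φ
  rw [mem_tabB_iff]
  constructor
  · exact exists_isColumn_of_xiMem hadm hadap
  · rintro ⟨s, S, hS, rfl⟩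
    exact hS.xiMem_colForm hadm hadap
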